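/- arXiv:1312.4913 — 2 statements merged into one kernel-verified Lean document; each statement's English description precedes it below -/
import Mathlib

section
/- There exist infinitely differentiable functions ω₀ and ρ₀ on [0,1], compactly supported in the open interval (0,1), and a finite time T* (one may take T* = 2) such that every classical solution (ω,ρ) of the 1D model Boussinesq system on a time interval [0,T) with initial data (ω₀,ρ₀) and with ∫₀^T sup_{x∈[0,1]} |ω(t,x)| dt < ∞ must satisfy T ≤ T*. In particular, ∫₀^t sup_x |ω(s,x)| ds tends to infinity as t approaches some finite time. -/
/-!
In the variable `z = -log x`, write `w(t,z) = ω(t,e^{-z})`, `r(t,z) = ρ(t,e^{-z})`. Both equations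
are then transported by the field `W(t,z) = ∫_0^z w(t,s) ds`, which is `Ω(t,e^{-z})`, vanishes at
`z = 0`, and is globally Lipschitz in `z` as long as `ω` is bounded. So if a solution exists beyond
time `2`, then trajectories of `W` exist on all of `[0,2]` (`exists_traj`), stay in `z > 0`, keep
their order, and carry constant values of `r`.

The acceleration of a trajectory `Z` is
`∫_0^Z (w² + e^s r) ds - e^Z r(t,Z) + r(t,0)` (`LogSol.accel`). If `r(0,·)` is decreasing on
`[0, Z(0)]`, then `r(t,·)` on `[0, Z(t)]` is bounded below by its value at `Z(t)`, and if `Y` is a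
second trajectory starting closer to `z = 0`, the acceleration of `Z` is at least
`(r(0,Y(0)) - r(0,Z(0))) e^Y` (`LogSol.accel_ge`).

Take `ω₀ = 0` and `ρ₀` such that `r(0,·)` decreases from `0` to `-64` on `[0, log 2]`, and choose
trajectories between whose starting points `r(0,·)` drops by `32, 16, 8, …`. Height `3 n` of the
`n`-th one from time `1 - 2^{-n}` on gives the next one an acceleration of at least
`32 · 2^{-n} · e^{3 n}`, enough to reach height `3(n+1)` within a further time `2^{-(n+1)}`. All of
these trajectories lie below the one starting at `log 2`, whose position at time `2` would have to
be infinite (`LogSol.no_solution`).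
-/

open MeasureTheory Set

/-- `Ω(t,x) = ∫_x^1 ω(t,y)/y dy`. -/
noncomputable def OmegaF (ω : ℝ → ℝ → ℝ) (t x : ℝ) : ℝ := ∫ y in x..1, ω t y / y

/-- The velocity `u(t,x) = -x Ω(t,x)`. -/
noncomputable def uF (ω : ℝ → ℝ → ℝ) (t x : ℝ) : ℝ := -x * OmegaF ω t x

/-- A classical solution of the 1D model Boussinesq system on a time interval `I`:
the pair `(ω,ρ)` is continuously differentiable in `(t,x)` on `I × [0,1]` and the
equations `∂_t ρ + u ∂_x ρ = 0`, `∂_t ω + u ∂_x ω = ∂_x ρ` hold pointwise. -/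
def IsClassicalSolution (ω ρ : ℝ → ℝ → ℝ) (I : Set ℝ) : Prop :=
  ContDiffOn ℝ 1 (fun p : ℝ × ℝ => ω p.1 p.2) (I ×ˢ Icc (0:ℝ) 1) ∧
  ContDiffOn ℝ 1 (fun p : ℝ × ℝ => ρ p.1 p.2) (I ×ˢ Icc (0:ℝ) 1) ∧
  ∀ t ∈ I, ∀ x ∈ Icc (0:ℝ) 1,
    (deriv (fun s => ρ s x) t + uF ω t x * deriv (fun y => ρ t y) x = 0) ∧
    (deriv (fun s => ω s x) t + uF ω t x * deriv (fun y => ω t y) x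
        = deriv (fun y => ρ t y) x)

/-- `sup_{x ∈ [0,1]} |f x|`. -/
noncomputable def supAbs (f : ℝ → ℝ) : ℝ := sSup ((fun x => |f x|) '' Icc (0:ℝ) 1)

/-! ### Trajectories of a globally Lipschitz field -/

/-- `Z` is an integral curve on `[0,2]` of the time-dependent field `W`. -/
def IsTraj (W : ℝ → ℝ → ℝ) (Z : ℝ → ℝ) : Prop :=
  ∀ t ∈ Icc (0:ℝ) 2, HasDerivWithinAt Z (W t (Z t)) (Icc 0 2) t

lemma IsTraj.continuousOn {W : ℝ → ℝ → ℝ} {Z : ℝ → ℝ} (h : IsTraj W Z) :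
    ContinuousOn Z (Icc 0 2) := fun t ht => (h t ht).continuousWithinAt

lemma IsTraj.hasDerivAt {W : ℝ → ℝ → ℝ} {Z : ℝ → ℝ} (h : IsTraj W Z) {t : ℝ}
    (ht : t ∈ Ioo (0:ℝ) 2) : HasDerivAt Z (W t (Z t)) t :=
  (h t (Ioo_subset_Icc_self ht)).hasDerivAt (Icc_mem_nhds ht.1 ht.2)

lemma IsTraj.right {W : ℝ → ℝ → ℝ} {Z : ℝ → ℝ} (h : IsTraj W Z) {t : ℝ}
    (ht : t ∈ Ico (0:ℝ) 2) : HasDerivWithinAt Z (W t (Z t)) (Ici t) t :=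
  (h t (Ico_subset_Icc_self ht)).mono_of_mem_nhdsWithin (Icc_mem_nhdsGE_of_mem ht)

lemma IsTraj.left {W : ℝ → ℝ → ℝ} {Z : ℝ → ℝ} (h : IsTraj W Z) {t : ℝ}
    (ht : t ∈ Ioc (0:ℝ) 2) : HasDerivWithinAt Z (W t (Z t)) (Iic t) t :=
  (h t (Ioc_subset_Icc_self ht)).mono_of_mem_nhdsWithin (Icc_mem_nhdsLE_of_mem ht)

/-- Global existence. The field is truncated outside `[-R,R]`, which makes it bounded, so that
the Picard–Lindelöf theorem applies on all of `[0,2]`; Grönwall's inequality shows that the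
trajectory stays in the region where nothing has been changed. -/
lemma exists_traj {W : ℝ → ℝ → ℝ} {C : NNReal} (hL : ∀ t, LipschitzWith C (W t))
    (hc : ∀ z, Continuous fun t => W t z) (h0 : ∀ t, W t 0 = 0) (y : ℝ) :
    ∃ Z, Z 0 = y ∧ IsTraj W Z := by
  set R : ℝ := |y| * Real.exp (C * 2) with hR
  have hR0 : 0 ≤ R := by positivity
  set c : ℝ → ℝ := fun z => max (-R) (min z R) with hcdef
  have hcL : LipschitzWith 1 c := (LipschitzWith.id.min_const R).const_max (-R)
  have hc0 : c 0 = 0 := by simp [hcdef, hR0]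
  have hcabs : ∀ z, |c z| ≤ R := fun z => by
    rw [abs_le]; exact ⟨le_max_left _ _, max_le (by linarith) (min_le_right _ _)⟩
  have hVL : ∀ t, LipschitzWith C (fun z => W t (c z)) := fun t => by
    have := (hL t).comp hcL
    rw [mul_one] at this
    exact this
  have hVz : ∀ t z, |W t (c z)| ≤ C * |z| := fun t z => by
    have := (hVL t).dist_le_mul z 0
    simpa [Real.dist_eq, hc0, h0] using this
  have hVb : ∀ t z, |W t (c z)| ≤ C * R := fun t z => by
    have := (hL t).dist_le_mul (c z) 0
    simp only [Real.dist_eq, h0, sub_zero] at this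
    exact this.trans (mul_le_mul_of_nonneg_left (hcabs z) C.2)
  have hPL : IsPicardLindelof (fun t z => W t (c z)) (tmin := 0) (tmax := 2)
      ⟨0, by norm_num⟩ y (C * ⟨R, hR0⟩ * 2) 0 (C * ⟨R, hR0⟩) C := by
    refine ⟨fun t _ => (hVL t).lipschitzOnWith, fun z _ => (hc (c z)).continuousOn,
      fun t _ z _ => ?_, ?_⟩
    · exact hVb t z
    · simp
  obtain ⟨Z, hZ0, hZ⟩ := hPL.exists_eq_forall_mem_Icc_hasDerivWithinAt₀
  simp only at hZ0
  refine ⟨Z, hZ0, fun t ht => ?_⟩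
  have hZ' : IsTraj (fun t z => W t (c z)) Z := hZ
  have hb := norm_le_gronwallBound_of_norm_deriv_right_le (K := C) (ε := 0) (δ := |y|)
    hZ'.continuousOn (fun x hx => hZ'.right hx) (by simp [hZ0])
    (fun x _ => by simpa using hVz x (Z x)) t ht
  rw [gronwallBound_ε0] at hb
  have hb' : |Z t| ≤ R := hb.trans (by
    rw [hR]; gcongr; linarith [ht.2])
  have : c (Z t) = Z t := by
    obtain ⟨h1, h2⟩ := abs_le.1 hb'
    simp only [hcdef]
    rw [min_eq_left h2, max_eq_right h1]
  simpa [this] using hZ t ht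

lemma traj_dist {W : ℝ → ℝ → ℝ} {C : NNReal} (hL : ∀ t, LipschitzWith C (W t))
    {Y Z : ℝ → ℝ} (hY : IsTraj W Y) (hZ : IsTraj W Z) {t : ℝ} (ht : t ∈ Icc (0:ℝ) 2) :
    |Y t - Z t| ≤ |Y 0 - Z 0| * Real.exp (C * 2) := by
  have := dist_le_of_trajectories_ODE hL hY.continuousOn (fun x hx => hY.right hx)
    hZ.continuousOn (fun x hx => hZ.right hx) le_rfl t ht
  rw [Real.dist_eq, Real.dist_eq] at this
  refine this.trans ?_
  gcongr
  linarith [ht.2]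

/-- Trajectories do not cross. -/
lemma traj_lt {W : ℝ → ℝ → ℝ} {C : NNReal} (hL : ∀ t, LipschitzWith C (W t))
    {Y Z : ℝ → ℝ} (hY : IsTraj W Y) (hZ : IsTraj W Z) (h : Y 0 < Z 0) {t : ℝ}
    (ht : t ∈ Icc (0:ℝ) 2) : Y t < Z t := by
  by_contra! hle
  have hsub : Icc 0 t ⊆ Icc (0:ℝ) 2 := Icc_subset_Icc_right ht.2
  have hcont : ContinuousOn (fun s => Z s - Y s) (Icc 0 t) :=
    (hZ.continuousOn.sub hY.continuousOn).mono hsub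
  obtain ⟨s, hs, hs0⟩ := intermediate_value_Icc' ht.1 hcont
    (show (0:ℝ) ∈ Icc (Z t - Y t) (Z 0 - Y 0) from ⟨by linarith, by linarith⟩)
  have hs2 := hsub hs
  have hss : Icc 0 s ⊆ Icc (0:ℝ) 2 := Icc_subset_Icc_right hs2.2
  have := ODE_solution_unique_of_mem_Icc_left (v := W) (s := fun _ => univ) (a := 0) (b := s)
    (fun t _ => (hL t).lipschitzOnWith) (hY.continuousOn.mono hss)
    (fun x hx => hY.left ⟨hx.1, hx.2.trans hs2.2⟩) (fun _ _ => trivial)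
    (hZ.continuousOn.mono hss)
    (fun x hx => hZ.left ⟨hx.1, hx.2.trans hs2.2⟩) (fun _ _ => trivial)
    (by simp only at hs0; linarith) ⟨le_rfl, hs.1⟩
  linarith

lemma traj_pos {W : ℝ → ℝ → ℝ} {C : NNReal} (hL : ∀ t, LipschitzWith C (W t))
    (h0 : ∀ t, W t 0 = 0) {Z : ℝ → ℝ} (hZ : IsTraj W Z) (h : 0 < Z 0) {t : ℝ}
    (ht : t ∈ Icc (0:ℝ) 2) : 0 < Z t := by
  have h00 : IsTraj W (fun _ => 0) := fun t _ => by
    simpa [h0] using hasDerivWithinAt_const t (Icc (0:ℝ) 2) (0:ℝ)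
  exact traj_lt hL h00 hZ h ht

/-- Every point between `0` and a trajectory at time `t` is reached by a trajectory that starts
between `0` and the initial point of that trajectory. -/
lemma traj_surj {W : ℝ → ℝ → ℝ} {C : NNReal} (hL : ∀ t, LipschitzWith C (W t))
    (hc : ∀ z, Continuous fun t => W t z) (h0 : ∀ t, W t 0 = 0) {Z : ℝ → ℝ}
    (hZ : IsTraj W Z) (h : 0 < Z 0) {t : ℝ} (ht : t ∈ Icc (0:ℝ) 2) {y : ℝ} (hy : 0 ≤ y)
    (hyZ : y ≤ Z t) : ∃ Y, IsTraj W Y ∧ Y 0 ∈ Icc 0 (Z 0) ∧ Y t = y := by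
  choose Φ hΦ0 hΦ using exists_traj hL hc h0
  have hcont : Continuous fun b => Φ b t := by
    have : LipschitzWith ⟨Real.exp (C * 2), by positivity⟩ fun b => Φ b t :=
      LipschitzWith.of_dist_le_mul fun a b => by
        have := traj_dist hL (hΦ a) (hΦ b) ht
        rw [hΦ0, hΦ0, mul_comm] at this
        rw [Real.dist_eq, Real.dist_eq]
        exact this
    exact this.continuous
  have h00 : IsTraj W (fun _ => 0) := fun t _ => by
    simpa [h0] using hasDerivWithinAt_const t (Icc (0:ℝ) 2) (0:ℝ)
  have e0 : Φ 0 t = 0 := by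
    have := traj_dist hL (hΦ 0) h00 ht
    simpa [hΦ0] using this
  have e1 : Φ (Z 0) t = Z t := by
    have := traj_dist hL (hΦ (Z 0)) hZ ht
    rw [hΦ0] at this
    simpa [sub_eq_zero] using this
  obtain ⟨b, hb, hbt⟩ := intermediate_value_Icc h.le hcont.continuousOn
    (show y ∈ Icc (Φ 0 t) (Φ (Z 0) t) by rw [e0, e1]; exact ⟨hy, hyZ⟩)
  exact ⟨Φ b, hΦ b, by rwa [hΦ0], hbt⟩

/-! ### The system in the variable `z = -log x` -/

/-- The domain `[0,2] × [0,∞)` of the variables `(t,z)`. -/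
abbrev logDom : Set (ℝ × ℝ) := Icc (0:ℝ) 2 ×ˢ Ici (0:ℝ)

/-- The field `∫_0^z w(t,s) ds`; for `w(t,z) = ω(t,e^{-z})` this is `Ω(t,e^{-z})`. -/
noncomputable def logVel (w : ℝ → ℝ → ℝ) (t z : ℝ) : ℝ := ∫ s in (0:ℝ)..z, w t s

/-- The system written for `w(t,z) = ω(t,e^{-z})` and `r(t,z) = ρ(t,e^{-z})`, with the equations
required in the interior only. The function `w` is also assumed to be continuous and bounded by
`C` on the whole plane, so that `logVel w` is a globally Lipschitz field. -/
structure LogSol (w r : ℝ → ℝ → ℝ) (C : NNReal) : Prop where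
  cont : Continuous (Function.uncurry w)
  bdd : ∀ t z, |w t z| ≤ C
  wC1 : ContDiffOn ℝ 1 (fun p : ℝ × ℝ => w p.1 p.2) logDom
  rC1 : ContDiffOn ℝ 1 (fun p : ℝ × ℝ => r p.1 p.2) logDom
  eq_r : ∀ t ∈ Ioo (0:ℝ) 2, ∀ z, 0 < z →
    deriv (fun s => r s z) t + logVel w t z * deriv (r t) z = 0
  eq_w : ∀ t ∈ Ioo (0:ℝ) 2, ∀ z, 0 < z →
    deriv (fun s => w s z) t + logVel w t z * deriv (w t) z = -Real.exp z * deriv (r t) z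

lemma logDom_unique : UniqueDiffOn ℝ logDom :=
  (uniqueDiffOn_Icc (by norm_num)).prod (uniqueDiffOn_Ici 0)

/-- Chain rule along a curve in `logDom`, which may run along the boundary. -/
lemma path_deriv {f : ℝ → ℝ → ℝ} (hf : ContDiffOn ℝ 1 (fun p : ℝ × ℝ => f p.1 p.2) logDom)
    {a b : ℝ → ℝ} {a' b' s : ℝ} (ha : HasDerivAt a a' s) (hb : HasDerivAt b b' s)
    (hmem : ∀ᶠ x in nhds s, (a x, b x) ∈ logDom) :
    HasDerivAt (fun x => f (a x) (b x))
      (fderivWithin ℝ (fun p : ℝ × ℝ => f p.1 p.2) logDom (a s, b s) (a', b')) s := by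
  have h1 : HasFDerivWithinAt (fun p : ℝ × ℝ => f p.1 p.2)
      (fderivWithin ℝ (fun p : ℝ × ℝ => f p.1 p.2) logDom (a s, b s)) logDom (a s, b s) :=
    ((hf.differentiableOn one_ne_zero) _ hmem.self_of_nhds).hasFDerivWithinAt
  have h2 : HasDerivWithinAt (fun x => (a x, b x)) (a', b') {x | (a x, b x) ∈ logDom} s :=
    (ha.prodMk hb).hasDerivWithinAt
  exact (h1.comp_hasDerivWithinAt s h2 (fun x hx => hx)).hasDerivAt hmem

/-- At interior points the total derivative is given by the two partial derivatives. -/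
lemma fderiv_partials {f : ℝ → ℝ → ℝ}
    (hf : ContDiffOn ℝ 1 (fun p : ℝ × ℝ => f p.1 p.2) logDom) {t z : ℝ}
    (ht : t ∈ Ioo (0:ℝ) 2) (hz : 0 < z) (v : ℝ) :
    fderivWithin ℝ (fun p : ℝ × ℝ => f p.1 p.2) logDom (t, z) (1, v)
      = deriv (fun s => f s z) t + v * deriv (f t) z := by
  have h1 := path_deriv hf (hasDerivAt_id t) (hasDerivAt_const t z) (by
    filter_upwards [Icc_mem_nhds ht.1 ht.2] with x hx using ⟨hx, hz.le⟩)
  have h2 := path_deriv hf (hasDerivAt_const z t) (hasDerivAt_id z) (by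
    filter_upwards [Ici_mem_nhds hz] with x hx using ⟨Ioo_subset_Icc_self ht, hx⟩)
  simp only [id] at h1 h2
  rw [h1.deriv, h2.deriv, ← smul_eq_mul, ← map_smul, ← map_add]
  simp

lemma hasDerivAt_z {f : ℝ → ℝ → ℝ}
    (hf : ContDiffOn ℝ 1 (fun p : ℝ × ℝ => f p.1 p.2) logDom) {t z : ℝ}
    (ht : t ∈ Ioo (0:ℝ) 2) (hz : 0 < z) : HasDerivAt (f t) (deriv (f t) z) z := by
  have h2 := path_deriv hf (hasDerivAt_const z t) (hasDerivAt_id z) (by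
    filter_upwards [Ici_mem_nhds hz] with x hx using ⟨Ioo_subset_Icc_self ht, hx⟩)
  exact h2.differentiableAt.hasDerivAt

namespace LogSol

variable {w r : ℝ → ℝ → ℝ} {C : NNReal}

lemma vel_cont (h : LogSol w r C) : Continuous (Function.uncurry (logVel w)) :=
  intervalIntegral.continuous_parametric_primitive_of_continuous h.cont

lemma w_cont (h : LogSol w r C) (t : ℝ) : Continuous (w t) :=
  h.cont.comp (Continuous.prodMk_right t)

lemma vel_zero (t : ℝ) : logVel w t 0 = 0 := by simp [logVel]

lemma vel_cont_time (h : LogSol w r C) (z : ℝ) : Continuous fun t => logVel w t z :=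
  h.vel_cont.comp (Continuous.prodMk_left z)

lemma vel_lip (h : LogSol w r C) (t : ℝ) : LipschitzWith C (logVel w t) := by
  refine LipschitzWith.of_dist_le_mul fun a b => ?_
  rw [Real.dist_eq, Real.dist_eq, logVel, logVel, intervalIntegral.integral_interval_sub_left
    ((h.w_cont t).intervalIntegrable _ _) ((h.w_cont t).intervalIntegrable _ _)]
  exact intervalIntegral.norm_integral_le_of_norm_le_const (f := w t) fun x _ => h.bdd t x

lemma vel_deriv (h : LogSol w r C) (t z : ℝ) : HasDerivAt (logVel w t) (w t z) z :=
  intervalIntegral.integral_hasDerivAt_right ((h.w_cont t).intervalIntegrable _ _)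
    ((h.w_cont t).stronglyMeasurableAtFilter _ _) (h.w_cont t).continuousAt

lemma pos (h : LogSol w r C) {Z : ℝ → ℝ} (hZ : IsTraj (logVel w) Z) (hZ0 : 0 < Z 0) {t : ℝ}
    (ht : t ∈ Icc (0:ℝ) 2) : 0 < Z t := traj_pos h.vel_lip vel_zero hZ hZ0 ht

lemma vel_along_cont (h : LogSol w r C) {Z : ℝ → ℝ} (hZ : IsTraj (logVel w) Z) :
    ContinuousOn (fun t => logVel w t (Z t)) (Icc 0 2) :=
  h.vel_cont.comp_continuousOn (continuousOn_id.prodMk hZ.continuousOn)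

/-- The function `r` is transported by the trajectories. -/
lemma r_const (h : LogSol w r C) {Z : ℝ → ℝ} (hZ : IsTraj (logVel w) Z) (hZ0 : 0 < Z 0) {t : ℝ}
    (ht : t ∈ Icc (0:ℝ) 2) : r t (Z t) = r 0 (Z 0) := by
  rcases ht.1.eq_or_lt with rfl | h0
  · rfl
  have hsub : Icc 0 t ⊆ Icc (0:ℝ) 2 := Icc_subset_Icc_right ht.2
  have hc : ContinuousOn (fun s => r s (Z s)) (Icc 0 t) :=
    h.rC1.continuousOn.comp (continuousOn_id.prodMk (hZ.continuousOn.mono hsub))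
      (fun s hs => ⟨hsub hs, (h.pos hZ hZ0 (hsub hs)).le⟩)
  obtain ⟨c, hcm, hc⟩ := exists_hasDerivAt_eq_slope (fun s => r s (Z s)) (fun _ => 0) h0 hc
    (fun s hs => by
      have hs2 : s ∈ Ioo (0:ℝ) 2 := ⟨hs.1, hs.2.trans_le ht.2⟩
      have := path_deriv h.rC1 (hasDerivAt_id s) (hZ.hasDerivAt hs2) (by
        filter_upwards [Icc_mem_nhds hs2.1 hs2.2] with x hx
          using ⟨hx, (h.pos hZ hZ0 hx).le⟩)
      simp only [id] at this
      rwa [fderiv_partials h.rC1 hs2 (h.pos hZ hZ0 (Ioo_subset_Icc_self hs2)),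
        h.eq_r s hs2 _ (h.pos hZ hZ0 (Ioo_subset_Icc_self hs2))] at this)
  rw [eq_div_iff (by linarith), zero_mul] at hc
  linarith

/-- The acceleration of a trajectory. The integral in `logVel w s (Z s)` is rescaled to `[0,1]` and
differentiated under the integral sign; the equation for `w` turns the integrand into a total
derivative up to the terms `w² + e^z r`. -/
lemma accel (h : LogSol w r C) {Z : ℝ → ℝ} (hZ : IsTraj (logVel w) Z) (hZ0 : 0 < Z 0) {t : ℝ}
    (ht : t ∈ Ioo (0:ℝ) 2) :
    HasDerivAt (fun s => logVel w s (Z s))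
      ((∫ s in (0:ℝ)..Z t, (w t s ^ 2 + Real.exp s * r t s))
        - Real.exp (Z t) * r t (Z t) + r t 0) t := by
  set v : ℝ → ℝ := fun s => logVel w s (Z s) with hv
  set D := fderivWithin ℝ (fun p : ℝ × ℝ => w p.1 p.2) logDom with hD
  have hDc : ContinuousOn D logDom := h.wC1.continuousOn_fderivWithin logDom_unique le_rfl
  have hpos : ∀ s ∈ Icc (0:ℝ) 2, 0 < Z s := fun s hs => h.pos hZ hZ0 hs
  have htI := Ioo_subset_Icc_self ht
  have hZt := hpos t htI
  set F' : ℝ → ℝ → ℝ := fun s σ => D (s, σ * Z s) (1, σ * v s) with hF'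
  have hF'c : ContinuousOn (Function.uncurry F') (Icc 0 2 ×ˢ Icc 0 1) := by
    have hZ1 : ContinuousOn (fun p : ℝ × ℝ => Z p.1) (Icc 0 2 ×ˢ Icc 0 1) :=
      hZ.continuousOn.comp continuousOn_fst fun p hp => hp.1
    have hv1 : ContinuousOn (fun p : ℝ × ℝ => v p.1) (Icc 0 2 ×ˢ Icc 0 1) :=
      (h.vel_along_cont hZ).comp continuousOn_fst fun p hp => hp.1
    have h1 : ContinuousOn (fun p : ℝ × ℝ => D (p.1, p.2 * Z p.1)) (Icc 0 2 ×ˢ Icc 0 1) :=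
      hDc.comp (continuousOn_fst.prodMk (continuousOn_snd.mul hZ1))
        fun p hp => ⟨hp.1, mul_nonneg hp.2.1 (hpos _ hp.1).le⟩
    exact h1.clm_apply (continuousOn_const.prodMk (continuousOn_snd.mul hv1))
  obtain ⟨B, hB⟩ := (isCompact_Icc.prod isCompact_Icc).exists_bound_of_continuousOn hF'c
  have hF'tc : ContinuousOn (F' t) (Icc 0 1) :=
    hF'c.comp (continuousOn_const.prodMk continuousOn_id) fun σ hσ => ⟨htI, hσ⟩
  have hwc : ∀ s, Continuous fun σ => w s (σ * Z s) := fun s => (h.w_cont s).comp (by fun_prop)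
  have hdiff : ∀ σ ∈ Icc (0:ℝ) 1, ∀ s ∈ Ioo (0:ℝ) 2,
      HasDerivAt (fun s => w s (σ * Z s)) (F' s σ) s := fun σ hσ s hs =>
    path_deriv h.wC1 (hasDerivAt_id s) ((hZ.hasDerivAt hs).const_mul σ) (by
      filter_upwards [Icc_mem_nhds hs.1 hs.2] with x hx
        using ⟨hx, mul_nonneg hσ.1 (hpos x hx).le⟩)
  have hsub : uIoc (0:ℝ) 1 ⊆ Icc 0 1 := by
    rw [uIoc_of_le zero_le_one]; exact Ioc_subset_Icc_self
  obtain ⟨hF'i, hmain⟩ := intervalIntegral.hasDerivAt_integral_of_dominated_loc_of_deriv_le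
    (μ := volume) (a := 0) (b := 1) (F := fun s σ => w s (σ * Z s)) (F' := F') (x₀ := t)
    (bound := fun _ => B) (Ioo_mem_nhds ht.1 ht.2)
    (Filter.Eventually.of_forall fun s => (hwc s).aestronglyMeasurable)
    ((hwc t).intervalIntegrable _ _)
    ((hF'tc.mono hsub).aestronglyMeasurable measurableSet_uIoc)
    (Filter.Eventually.of_forall fun σ hσ s hs =>
      hB (s, σ) ⟨Ioo_subset_Icc_self hs, hsub hσ⟩)
    intervalIntegrable_const
    (Filter.Eventually.of_forall fun σ hσ s hs => hdiff σ (hsub hσ) s hs)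
  have hscale : ∀ (g : ℝ → ℝ) (s : ℝ), Z s * ∫ σ in (0:ℝ)..1, g (σ * Z s)
      = ∫ x in (0:ℝ)..Z s, g x := fun g s => by
    rw [intervalIntegral.mul_integral_comp_mul_right]; simp
  have hprod := (hZ.hasDerivAt ht).mul hmain
  have hfun : (fun s => logVel w s (Z s)) = Z * fun s => ∫ σ in (0:ℝ)..1, w s (σ * Z s) := by
    funext s; exact (hscale (w s) s).symm
  rw [hv, hfun]
  refine hprod.congr_deriv ?_
  -- The antiderivative produced by the equation for `w`.
  set Q : ℝ → ℝ := fun σ => σ * v t * w t (σ * Z t) - logVel w t (σ * Z t) * w t (σ * Z t)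
    - Real.exp (σ * Z t) * r t (σ * Z t) with hQ
  set g : ℝ → ℝ := fun s => w t s ^ 2 + Real.exp s * r t s with hg
  have hrc : ContinuousOn (fun σ => r t (σ * Z t)) (Icc 0 1) :=
    h.rC1.continuousOn.comp (continuousOn_const.prodMk (continuousOn_id.mul continuousOn_const))
      fun σ hσ => ⟨htI, mul_nonneg hσ.1 hZt.le⟩
  have hgc : ContinuousOn (fun σ => g (σ * Z t)) (Icc 0 1) := by
    refine ((hwc t).continuousOn.pow 2).add (ContinuousOn.mul ?_ hrc)
    fun_prop
  have hvelc : Continuous fun σ => logVel w t (σ * Z t) :=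
    h.vel_cont.comp (continuous_const.prodMk (by fun_prop))
  have hQc : ContinuousOn Q (Icc 0 1) := by
    refine ContinuousOn.sub (Continuous.continuousOn ?_) (ContinuousOn.mul ?_ hrc)
    · exact ((continuous_id.mul continuous_const).mul (hwc t)).sub (hvelc.mul (hwc t))
    · fun_prop
  set q : ℝ → ℝ := fun σ => v t * w t (σ * Z t) + Z t * F' t σ - Z t * g (σ * Z t) with hq
  have hqd : ∀ σ ∈ Ioo (0:ℝ) 1, HasDerivAt Q (q σ) σ := fun σ hσ => by
    have hz : 0 < σ * Z t := mul_pos hσ.1 hZt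
    have hs : HasDerivAt (fun σ => σ * Z t) (Z t) σ := by
      simpa using (hasDerivAt_id σ).mul_const (Z t)
    have dw := (hasDerivAt_z h.wC1 ht hz).comp σ hs
    have dr := (hasDerivAt_z h.rC1 ht hz).comp σ hs
    have dW := (h.vel_deriv t (σ * Z t)).comp σ hs
    have de := hs.exp
    have hσv : HasDerivAt (fun σ => σ * v t) (v t) σ := by
      simpa using (hasDerivAt_id σ).mul_const (v t)
    have := ((hσv.mul dw).sub (dW.mul dw)).sub (de.mul dr)
    refine HasDerivAt.congr_deriv (f := Q) this ?_
    have e := h.eq_w t ht _ hz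
    have e2 : F' t σ = _ := fderiv_partials h.wC1 ht hz (σ * v t)
    simp only [hq, hg, e2, Function.comp_apply]
    linear_combination (-Z t) * e
  have i1 : IntervalIntegrable (fun σ => v t * w t (σ * Z t)) volume 0 1 :=
    ((hwc t).const_mul _).intervalIntegrable _ _
  have i2 : IntervalIntegrable (fun σ => Z t * F' t σ) volume 0 1 := hF'i.const_mul _
  have i3 : IntervalIntegrable (fun σ => Z t * g (σ * Z t)) volume 0 1 :=
    ((hgc.mono (by rw [uIcc_of_le zero_le_one])).intervalIntegrable).const_mul _
  have hFTC := intervalIntegral.integral_eq_sub_of_hasDerivAt_of_le zero_le_one hQc hqd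
    ((i1.add i2).sub i3)
  simp only [hq] at hFTC
  rw [intervalIntegral.integral_sub (i1.add i2) i3, intervalIntegral.integral_add i1 i2,
    intervalIntegral.integral_const_mul, intervalIntegral.integral_const_mul,
    intervalIntegral.integral_const_mul, hscale g t] at hFTC
  simp only [hQ, one_mul, zero_mul, vel_zero, Real.exp_zero] at hFTC
  have hvt : logVel w t (Z t) = v t := rfl
  rw [hvt] at hFTC ⊢
  linarith

end LogSol

/-! ### The cascade of trajectories -/

namespace LogSol

variable {w r : ℝ → ℝ → ℝ} {C : NNReal}

/-- If `r(0,·)` decreases on `[0, Z(0)]`, then at any later time the minimum of `r(t,·)` over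
`[0, Z(t)]` is its transported value at `Z(t)`. -/
lemma r_ge (h : LogSol w r C) {Z : ℝ → ℝ} (hZ : IsTraj (logVel w) Z) (hZ0 : 0 < Z 0)
    (hr : AntitoneOn (r 0) (Icc 0 (Z 0))) {t : ℝ} (ht : t ∈ Icc (0:ℝ) 2) {y : ℝ}
    (hy : y ∈ Icc 0 (Z t)) : r 0 (Z 0) ≤ r t y := by
  have key : ∀ y ∈ Ioc 0 (Z t), r 0 (Z 0) ≤ r t y := fun y hy => by
    obtain ⟨Y, hY, hY0, hYt⟩ :=
      traj_surj h.vel_lip h.vel_cont_time vel_zero hZ hZ0 ht hy.1.le hy.2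
    have hYpos : 0 < Y 0 := by
      refine hY0.1.lt_of_ne fun he => ?_
      have h00 : IsTraj (logVel w) (fun _ => 0) := fun t _ => by
        simpa [vel_zero] using hasDerivWithinAt_const t (Icc (0:ℝ) 2) (0:ℝ)
      have := traj_dist h.vel_lip hY h00 ht
      rw [← he, hYt] at this
      simp at this
      exact hy.1.ne' this
    rw [← hYt, h.r_const hY hYpos ht]
    exact hr hY0 ⟨hZ0.le, le_rfl⟩ hY0.2
  rcases hy.1.eq_or_lt with rfl | h0
  · -- The point `z = 0` is on the boundary and is reached by continuity.
    have hc : ContinuousOn (r t) (Ici 0) :=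
      h.rC1.continuousOn.comp (continuousOn_const.prodMk continuousOn_id) fun s hs => ⟨ht, hs⟩
    have hl : Filter.Tendsto (r t) (nhdsWithin 0 (Ioi 0)) (nhds (r t 0)) :=
      ((hc 0 self_mem_Ici).mono Ioi_subset_Ici_self)
    refine ge_of_tendsto hl ?_
    filter_upwards [Ioc_mem_nhdsGT (h.pos hZ hZ0 ht)] with x hx using key x hx
  · exact key y ⟨h0, hy.2⟩

/-- A drop of `r` between two trajectories accelerates the one further from `z = 0`, by an amount
exponential in the position of the other. -/
lemma accel_ge (h : LogSol w r C) {Y Z : ℝ → ℝ} (hY : IsTraj (logVel w) Y)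
    (hZ : IsTraj (logVel w) Z) (hY0 : 0 < Y 0) (hYZ : Y 0 < Z 0)
    (hr : AntitoneOn (r 0) (Icc 0 (Z 0))) {t : ℝ} (ht : t ∈ Icc (0:ℝ) 2) :
    (r 0 (Y 0) - r 0 (Z 0)) * Real.exp (Y t) ≤
      (∫ s in (0:ℝ)..Z t, (w t s ^ 2 + Real.exp s * r t s))
        - Real.exp (Z t) * r t (Z t) + r t 0 := by
  have hrY := hr.mono (Icc_subset_Icc_right hYZ.le)
  have hZ0 := hY0.trans hYZ
  have hYt := h.pos hY hY0 ht
  have hlt := traj_lt h.vel_lip hY hZ hYZ ht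
  have hc : ContinuousOn (fun s => w t s ^ 2 + Real.exp s * r t s) (Ici 0) := by
    have hrc : ContinuousOn (r t) (Ici 0) :=
      h.rC1.continuousOn.comp (continuousOn_const.prodMk continuousOn_id) fun s hs => ⟨ht, hs⟩
    have := h.w_cont t
    refine ContinuousOn.add (by fun_prop) (ContinuousOn.mul (by fun_prop) hrc)
  have i1 : IntervalIntegrable (fun s => w t s ^ 2 + Real.exp s * r t s) volume 0 (Y t) :=
    (hc.mono (by rw [uIcc_of_le hYt.le]; exact Icc_subset_Ici_self)).intervalIntegrable
  have i2 : IntervalIntegrable (fun s => w t s ^ 2 + Real.exp s * r t s) volume (Y t) (Z t) :=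
    (hc.mono (by rw [uIcc_of_le hlt.le]; exact fun s hs => hYt.le.trans hs.1)).intervalIntegrable
  have j : ∀ c a b : ℝ, IntervalIntegrable (fun s => Real.exp s * c) volume a b := fun c a b =>
    (by fun_prop : Continuous fun s => Real.exp s * c).intervalIntegrable _ _
  have b1 : ∫ s in (0:ℝ)..Y t, Real.exp s * r 0 (Y 0) ≤
      ∫ s in (0:ℝ)..Y t, (w t s ^ 2 + Real.exp s * r t s) :=
    intervalIntegral.integral_mono_on hYt.le (j _ _ _) i1 fun s hs => by
      have := mul_le_mul_of_nonneg_left (h.r_ge hY hY0 hrY ht hs) (Real.exp_pos s).le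
      nlinarith [sq_nonneg (w t s)]
  have b2 : ∫ s in (Y t)..Z t, Real.exp s * r 0 (Z 0) ≤
      ∫ s in (Y t)..Z t, (w t s ^ 2 + Real.exp s * r t s) :=
    intervalIntegral.integral_mono_on hlt.le (j _ _ _) i2 fun s hs => by
      have := mul_le_mul_of_nonneg_left (h.r_ge hZ hZ0 hr ht ⟨hYt.le.trans hs.1, hs.2⟩)
        (Real.exp_pos s).le
      nlinarith [sq_nonneg (w t s)]
  rw [intervalIntegral.integral_mul_const, integral_exp] at b1 b2
  rw [Real.exp_zero] at b1
  rw [← intervalIntegral.integral_add_adjacent_intervals i1 i2, h.r_const hZ hZ0 ht]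
  have b3 := h.r_ge hY hY0 hrY ht ⟨le_rfl, hYt.le⟩
  linarith

end LogSol

lemma le_of_deriv_nonneg {f f' : ℝ → ℝ} {a b : ℝ} (hf : ContinuousOn f (Icc a b))
    (hd : ∀ x ∈ Ioo a b, HasDerivAt f (f' x) x) (hn : ∀ x ∈ Ioo a b, 0 ≤ f' x) {t : ℝ}
    (ht : t ∈ Icc a b) : f a ≤ f t := by
  refine monotoneOn_of_deriv_nonneg (convex_Icc a b) hf ?_ ?_ ⟨le_rfl, ht.1.trans ht.2⟩ ht ht.1
  · rw [interior_Icc]; exact fun x hx => (hd x hx).differentiableAt.differentiableWithinAt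
  · rw [interior_Icc]; exact fun x hx => by rw [(hd x hx).deriv]; exact hn x hx

namespace LogSol

variable {w r : ℝ → ℝ → ℝ} {C : NNReal}

/-- One step of the cascade: integrating `accel_ge` twice in time. -/
lemma step (h : LogSol w r C) (hw0 : ∀ s, w 0 s = 0) {Y Z : ℝ → ℝ} (hY : IsTraj (logVel w) Y)
    (hZ : IsTraj (logVel w) Z) (hY0 : 0 < Y 0) (hYZ : Y 0 < Z 0)
    (hr : AntitoneOn (r 0) (Icc 0 (Z 0))) {a A : ℝ} (ha : 0 ≤ a)
    (hA : ∀ t ∈ Icc a 2, A ≤ Y t) {t : ℝ} (ht : t ∈ Icc a 2) :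
    (r 0 (Y 0) - r 0 (Z 0)) * Real.exp A * (t - a) ^ 2 / 2 ≤ Z t := by
  have hZ0 := hY0.trans hYZ
  set v : ℝ → ℝ := fun s => logVel w s (Z s) with hv
  have hvc : ContinuousOn v (Icc 0 2) := h.vel_along_cont hZ
  have hG : 0 ≤ r 0 (Y 0) - r 0 (Z 0) :=
    sub_nonneg.2 (hr ⟨hY0.le, hYZ.le⟩ ⟨hZ0.le, le_rfl⟩ hYZ.le)
  set G := r 0 (Y 0) - r 0 (Z 0)
  have hge := fun s (hs : s ∈ Icc (0:ℝ) 2) => h.accel_ge hY hZ hY0 hYZ hr hs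
  have hv0 : v 0 = 0 := by simp [hv, logVel, hw0]
  have hvn : ∀ s ∈ Icc (0:ℝ) 2, 0 ≤ v s := fun s hs => by
    have := le_of_deriv_nonneg hvc (fun x hx => h.accel hZ hZ0 hx)
      (fun x hx => le_trans (by positivity) (hge x (Ioo_subset_Icc_self hx))) hs
    rwa [hv0] at this
  have hsub : Icc a 2 ⊆ Icc (0:ℝ) 2 := Icc_subset_Icc_left ha
  have hvl : ∀ s ∈ Icc a 2, G * Real.exp A * (s - a) ≤ v s := fun s hs => by
    have := le_of_deriv_nonneg (f := fun x => v x - G * Real.exp A * (x - a))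
      ((hvc.mono hsub).sub (by fun_prop))
      (fun x hx => (h.accel hZ hZ0 ⟨ha.trans_lt hx.1, hx.2⟩).sub
        (((hasDerivAt_id x).sub_const a).const_mul (G * Real.exp A)))
      (fun x hx => by
        have h1 := hge x (hsub (Ioo_subset_Icc_self hx))
        have h2 : G * Real.exp A ≤ G * Real.exp (Y x) :=
          mul_le_mul_of_nonneg_left (Real.exp_le_exp.2 (hA x (Ioo_subset_Icc_self hx))) hG
        linarith) hs
    have h0 := hvn a (hsub ⟨le_rfl, hs.1.trans hs.2⟩)
    simp only [sub_self, mul_zero, sub_zero] at this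
    linarith
  have := le_of_deriv_nonneg (f := fun x => Z x - G * Real.exp A * ((x - a) ^ 2 / 2))
    ((hZ.continuousOn.mono hsub).sub (by fun_prop))
    (fun x hx => (hZ.hasDerivAt ⟨ha.trans_lt hx.1, hx.2⟩).sub
      (((((hasDerivAt_id x).sub_const a).pow 2).div_const 2).const_mul (G * Real.exp A)))
    (fun x hx => by
      have h1 := hvl x (Ioo_subset_Icc_self hx)
      simp only [hv] at h1
      simp only [id]
      push_cast
      linarith) ht
  have h0 := h.pos hZ hZ0 (hsub ⟨le_rfl, ht.1.trans ht.2⟩)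
  simp only [sub_self] at this
  norm_num at this
  linarith

/-- Trajectories starting at points between which `r(0,·)` drops by `32, 16, 8, …` reach the
heights `3, 6, 9, …` at the times `1/2, 3/4, 7/8, …`, so that a trajectory lying above all of them
cannot exist up to time `1`. -/
lemma no_solution (h : LogSol w r C) (hw0 : ∀ s, w 0 s = 0) {zs : ℝ} {z : ℕ → ℝ}
    (hz0 : 0 < z 0) (hz : ∀ n, z n < z (n + 1)) (hzs : ∀ n, z n < zs)
    (hr : AntitoneOn (r 0) (Icc 0 zs))
    (hgap : ∀ n, r 0 (z n) - r 0 (z (n + 1)) = 64 * (1 / 2 : ℝ) ^ (n + 1)) : False := by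
  choose Φ hΦ0 hΦ using exists_traj h.vel_lip h.vel_cont_time (vel_zero (w := w))
  have hzpos : ∀ n, 0 < z n := fun n => by
    induction n with
    | zero => exact hz0
    | succ n ih => exact ih.trans (hz n)
  have key : ∀ n : ℕ, ∀ t ∈ Icc (1 - (1 / 2 : ℝ) ^ n) 2, 3 * (n : ℝ) ≤ Φ (z n) t := by
    intro n
    induction n with
    | zero =>
      intro t ht
      have := (h.pos (hΦ (z 0)) (by rw [hΦ0]; exact hz0)
        (t := t) ⟨by simpa using ht.1, ht.2⟩).le
      simpa using this
    | succ n ih =>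
      intro t ht
      have hδ : (1 / 2 : ℝ) ^ n = 2 * (1 / 2 : ℝ) ^ (n + 1) := by rw [pow_succ]; ring
      have hδ0 : 0 < (1 / 2 : ℝ) ^ (n + 1) := by positivity
      have hle1 : (1 / 2 : ℝ) ^ n ≤ 1 := pow_le_one₀ (by norm_num) (by norm_num)
      have hst := h.step hw0 (hΦ (z n)) (hΦ (z (n + 1))) (by rw [hΦ0]; exact hzpos n)
        (by rw [hΦ0, hΦ0]; exact hz n)
        (hr.mono (Icc_subset_Icc_right (by rw [hΦ0]; exact (hzs _).le)))
        (a := 1 - (1 / 2 : ℝ) ^ n) (by linarith) ih (t := t) ⟨by linarith [ht.1], ht.2⟩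
      rw [hΦ0, hΦ0, hgap] at hst
      refine le_trans ?_ hst
      have h1 : (1 / 2 : ℝ) ^ (n + 1) ≤ t - (1 - (1 / 2 : ℝ) ^ n) := by linarith [ht.1]
      have h2 : ((1 / 2 : ℝ) ^ (n + 1)) ^ 2 ≤ (t - (1 - (1 / 2 : ℝ) ^ n)) ^ 2 := by gcongr
      have h3 : (16 : ℝ) ^ n ≤ Real.exp (3 * n) := by
        have : (16:ℝ) ≤ Real.exp 3 := by
          have e := Real.exp_one_gt_d9
          have : Real.exp 3 = Real.exp 1 ^ 3 := by rw [← Real.exp_nat_mul]; norm_num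
          rw [this]
          calc (16:ℝ) ≤ 2.7 ^ 3 := by norm_num
            _ ≤ _ := by gcongr; linarith
        calc (16:ℝ) ^ n ≤ Real.exp 3 ^ n := by gcongr
          _ = _ := by rw [← Real.exp_nat_mul]; ring_nf
      have h4 : (n : ℝ) + 1 ≤ 2 ^ n := by exact_mod_cast Nat.lt_two_pow_self
      calc (3 : ℝ) * ((n + 1 : ℕ) : ℝ) ≤ 4 * 2 ^ n := by push_cast; linarith
        _ = 64 * (1 / 2 : ℝ) ^ (n + 1) * 16 ^ n * ((1 / 2 : ℝ) ^ (n + 1)) ^ 2 / 2 := by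
          have : (16:ℝ) ^ n = 2 ^ n * 2 ^ n * 2 ^ n * 2 ^ n := by
            rw [← mul_pow, ← mul_pow, ← mul_pow]; norm_num
          rw [this, pow_succ, one_div, inv_pow]
          have h2n : (2:ℝ) ^ n ≠ 0 := by positivity
          field_simp
          norm_num
        _ ≤ _ := by gcongr
  obtain ⟨n, hn⟩ := exists_nat_gt (Φ zs 2)
  have h1 := key n 2 ⟨by linarith [show (0:ℝ) ≤ (1 / 2 : ℝ) ^ n by positivity], le_rfl⟩
  have h2 := traj_lt h.vel_lip (hΦ (z n)) (hΦ zs) (by rw [hΦ0, hΦ0]; exact hzs n)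
    (t := 2) ⟨by norm_num, le_rfl⟩
  have : (0:ℝ) ≤ n := n.cast_nonneg
  linarith

end LogSol

/-! ### Passing to the variable `z = -log x` -/

lemma exp_neg_mem {z : ℝ} (hz : 0 ≤ z) : Real.exp (-z) ∈ Icc (0:ℝ) 1 :=
  ⟨(Real.exp_pos _).le, Real.exp_le_one_iff.2 (by linarith)⟩

/-- A classical solution that lives beyond time `2` yields a bounded solution of the system in
`z = -log x`; `ω` is extended to the whole plane by clamping `t` to `[0,2]` and `z` to `[0,∞)`. -/
lemma logSol_of_classical {T : ℝ} {ω ρ : ℝ → ℝ → ℝ} (hT : 2 < T)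
    (h : IsClassicalSolution ω ρ (Ico 0 T)) :
    ∃ C, LogSol (fun t z => ω (max 0 (min t 2)) (Real.exp (-(max z 0))))
      (fun t z => ρ t (Real.exp (-z))) C := by
  obtain ⟨hω, hρ, heq⟩ := h
  set w : ℝ → ℝ → ℝ := fun t z => ω (max 0 (min t 2)) (Real.exp (-(max z 0))) with hw
  have hcl : ∀ t : ℝ, max 0 (min t 2) ∈ Icc (0:ℝ) 2 := fun t =>
    ⟨le_max_left _ _, max_le (by norm_num) (min_le_right _ _)⟩
  have hsub : Icc (0:ℝ) 2 ⊆ Ico 0 T := fun t ht => ⟨ht.1, ht.2.trans_lt hT⟩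
  have hwt : ∀ t ∈ Icc (0:ℝ) 2, ∀ z, 0 ≤ z → w t z = ω t (Real.exp (-z)) := fun t ht z hz => by
    simp only [hw]
    rw [min_eq_left ht.2, max_eq_right ht.1, max_eq_left hz]
  obtain ⟨B, hB⟩ := ((isCompact_Icc (a := (0:ℝ)) (b := 2)).prod
    (isCompact_Icc (a := (0:ℝ)) (b := 1))).exists_bound_of_continuousOn
    (hω.continuousOn.mono (prod_mono_left hsub))
  have hmap : MapsTo (fun p : ℝ × ℝ => (p.1, Real.exp (-p.2))) logDom (Ico 0 T ×ˢ Icc (0:ℝ) 1) :=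
    fun p hp => ⟨hsub hp.1, exp_neg_mem hp.2⟩
  have hsm : ContDiffOn ℝ 1 (fun p : ℝ × ℝ => (p.1, Real.exp (-p.2))) logDom := by
    apply ContDiff.contDiffOn
    fun_prop
  have hvel : ∀ t ∈ Ioo (0:ℝ) 2, ∀ z, 0 < z → logVel w t z = OmegaF ω t (Real.exp (-z)) := by
    intro t ht z hz
    have hcong : logVel w t z = ∫ s in (0:ℝ)..z, ω t (Real.exp (-s)) := by
      refine intervalIntegral.integral_congr fun s hs => ?_
      rw [uIcc_of_le hz.le] at hs
      exact hwt t (Ioo_subset_Icc_self ht) s hs.1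
    have hωt : ContinuousOn (ω t) (Icc 0 1) :=
      hω.continuousOn.comp (continuousOn_const.prodMk continuousOn_id)
        fun x hx => ⟨hsub (Ioo_subset_Icc_self ht), hx⟩
    have hsubst := intervalIntegral.integral_comp_mul_deriv'' (a := 0) (b := z)
      (f := fun s => Real.exp (-s)) (f' := fun s => -Real.exp (-s)) (g := fun y => ω t y / y)
      (by fun_prop)
      (fun x _ => by simpa using ((hasDerivAt_id x).neg.exp).hasDerivWithinAt)
      (by fun_prop)
      (by
        rw [uIcc_of_le hz.le]
        refine ContinuousOn.div (hωt.mono ?_) continuousOn_id ?_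
        · rintro _ ⟨s, hs, rfl⟩; exact exp_neg_mem hs.1
        · rintro _ ⟨s, hs, rfl⟩; exact (Real.exp_pos _).ne')
    have hl : (∫ s in (0:ℝ)..z, ((fun y => ω t y / y) ∘ fun s => Real.exp (-s)) s
        * (-Real.exp (-s))) = -∫ s in (0:ℝ)..z, ω t (Real.exp (-s)) := by
      rw [← intervalIntegral.integral_neg]
      refine intervalIntegral.integral_congr fun s _ => ?_
      have := (Real.exp_pos (-s)).ne'
      simp only [Function.comp_apply]
      field_simp
    rw [hl] at hsubst
    rw [neg_zero, Real.exp_zero] at hsubst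
    rw [hcong, OmegaF, intervalIntegral.integral_symm 1, ← hsubst, neg_neg]
  have hchain : ∀ {f : ℝ → ℝ → ℝ},
      ContDiffOn ℝ 1 (fun p : ℝ × ℝ => f p.1 p.2) (Ico 0 T ×ˢ Icc (0:ℝ) 1) →
      ∀ t ∈ Ioo (0:ℝ) 2, ∀ z, 0 < z → deriv (fun y => f t (Real.exp (-y))) z
        = -Real.exp (-z) * deriv (f t) (Real.exp (-z)) := by
    intro f hf t ht z hz
    have hx : Real.exp (-z) ∈ Ioo (0:ℝ) 1 :=
      ⟨Real.exp_pos _, Real.exp_lt_one_iff.2 (by linarith)⟩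
    have hd : DifferentiableAt ℝ (fun p : ℝ × ℝ => f p.1 p.2) (t, Real.exp (-z)) :=
      (hf.contDiffAt (prod_mem_nhds (Ico_mem_nhds ht.1 (ht.2.trans hT))
        (Icc_mem_nhds hx.1 hx.2))).differentiableAt one_ne_zero
    have hd2 : DifferentiableAt ℝ (f t) (Real.exp (-z)) :=
      hd.comp (Real.exp (-z)) (f := fun x => (t, x))
        ((differentiableAt_const t).prodMk differentiableAt_id)
    have he : HasDerivAt (fun y : ℝ => Real.exp (-y)) (-Real.exp (-z)) z := by
      simpa using (hasDerivAt_id z).neg.exp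
    rw [mul_comm]
    exact (hd2.hasDerivAt.comp z he).deriv
  have hwd : ∀ t ∈ Ioo (0:ℝ) 2, ∀ z, 0 < z →
      deriv (fun s => w s z) t = deriv (fun s => ω s (Real.exp (-z))) t := fun t ht z hz =>
    Filter.EventuallyEq.deriv_eq (by
      filter_upwards [Icc_mem_nhds ht.1 ht.2] with s hs using hwt s hs z hz.le)
  have hwz : ∀ t ∈ Ioo (0:ℝ) 2, ∀ z, 0 < z →
      deriv (w t) z = deriv (fun y => ω t (Real.exp (-y))) z := fun t ht z hz =>
    Filter.EventuallyEq.deriv_eq (by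
      filter_upwards [Ici_mem_nhds hz] with s hs using hwt t (Ioo_subset_Icc_self ht) s hs)
  have hee : ∀ z : ℝ, Real.exp z * Real.exp (-z) = 1 := fun z => by
    rw [← Real.exp_add]; simp
  refine ⟨⟨|B|, abs_nonneg B⟩, ?_, ?_, ?_, ?_, ?_, ?_⟩
  · exact hω.continuousOn.comp_continuous
      (f := fun p : ℝ × ℝ => (max 0 (min p.1 2), Real.exp (-(max p.2 0)))) (by fun_prop)
      fun p => ⟨hsub (hcl _), exp_neg_mem (le_max_right _ _)⟩
  · intro t z
    exact (hB (max 0 (min t 2), Real.exp (-(max z 0)))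
      ⟨hcl t, exp_neg_mem (le_max_right _ _)⟩).trans (le_abs_self B)
  · exact (hω.comp hsm hmap).congr fun p hp => hwt p.1 hp.1 p.2 hp.2
  · exact hρ.comp hsm hmap
  · intro t ht z hz
    have e := (heq t (hsub (Ioo_subset_Icc_self ht)) _ (exp_neg_mem hz.le)).1
    rw [hvel t ht z hz, hchain hρ t ht z hz]
    simp only [uF] at e
    linear_combination e
  · intro t ht z hz
    have e := (heq t (hsub (Ioo_subset_Icc_self ht)) _ (exp_neg_mem hz.le)).2
    rw [hvel t ht z hz, hchain hρ t ht z hz, hwd t ht z hz, hwz t ht z hz, hchain hω t ht z hz]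
    simp only [uF] at e
    linear_combination e - deriv (ρ t) (Real.exp (-z)) * hee z

/-! ### The initial density -/

/-- The initial density: a smooth bump of depth `64`, supported in `[1/4, 3/4]`, equal to `-64` on
`[3/8, 1/2]` and increasing on `[1/2, 1]`. -/
noncomputable def rhoInit (x : ℝ) : ℝ :=
  -(64 * Real.smoothTransition (8 * x - 2) * Real.smoothTransition (3 - 4 * x))

lemma rhoInit_contDiff : ContDiff ℝ (⊤ : ℕ∞) rhoInit := by
  have h1 : ContDiff ℝ (⊤ : ℕ∞) fun x : ℝ => Real.smoothTransition (8 * x - 2) :=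
    Real.smoothTransition.contDiff.comp (by fun_prop)
  have h2 : ContDiff ℝ (⊤ : ℕ∞) fun x : ℝ => Real.smoothTransition (3 - 4 * x) :=
    Real.smoothTransition.contDiff.comp (by fun_prop)
  exact ((contDiff_const.mul h1).mul h2).neg

lemma rhoInit_zero {x : ℝ} (hx : x ∉ Icc (1 / 4 : ℝ) (3 / 4)) : rhoInit x = 0 := by
  rw [mem_Icc, not_and_or, not_le, not_le] at hx
  unfold rhoInit
  rcases hx with hx | hx
  · rw [Real.smoothTransition.zero_of_nonpos (x := 8 * x - 2) (by linarith)]; simp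
  · rw [Real.smoothTransition.zero_of_nonpos (x := 3 - 4 * x) (by linarith)]; simp

lemma rhoInit_right {x : ℝ} (hx : 1 / 2 ≤ x) :
    rhoInit x = -(64 * Real.smoothTransition (3 - 4 * x)) := by
  rw [rhoInit, Real.smoothTransition.one_of_one_le (x := 8 * x - 2) (by linarith), mul_one]

/-- **Finite time blow up for the 1D model Boussinesq system.**
There exist smooth `ω₀, ρ₀`, compactly supported in `(0,1)`, and a finite time
`T* = 2`, such that every classical solution `(ω,ρ)` on `[0,T)` with initial data
`(ω₀,ρ₀)` and `∫_0^T sup_x |ω(t,x)| dt < ∞` must satisfy `T ≤ T*`. -/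
theorem finite_time_blowup :
    ∃ (ω₀ ρ₀ : ℝ → ℝ) (Tstar : ℝ),
      ContDiff ℝ (⊤ : ℕ∞) ω₀ ∧ ContDiff ℝ (⊤ : ℕ∞) ρ₀ ∧
      HasCompactSupport ω₀ ∧ HasCompactSupport ρ₀ ∧
      tsupport ω₀ ⊆ Ioo (0:ℝ) 1 ∧ tsupport ρ₀ ⊆ Ioo (0:ℝ) 1 ∧
      Tstar = 2 ∧
      ∀ (T : ℝ) (ω ρ : ℝ → ℝ → ℝ),
        IsClassicalSolution ω ρ (Ico 0 T) →
        (∀ x ∈ Icc (0:ℝ) 1, ω 0 x = ω₀ x ∧ ρ 0 x = ρ₀ x) →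
        IntegrableOn (fun t => supAbs (fun x => ω t x)) (Ioo 0 T) →
        T ≤ Tstar := by
  refine ⟨0, rhoInit, 2, contDiff_const, rhoInit_contDiff, HasCompactSupport.zero,
    HasCompactSupport.intro isCompact_Icc fun x hx => rhoInit_zero hx, by simp [tsupport], ?_,
    rfl, ?_⟩
  · refine Subset.trans (closure_minimal (t := Icc (1 / 4 : ℝ) (3 / 4)) ?_ isClosed_Icc) ?_
    · exact fun x hx => by_contra fun hn => hx (rhoInit_zero hn)
    · exact fun x hx => ⟨by linarith [hx.1], by linarith [hx.2]⟩
  intro T ω ρ hsol hinit _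
  by_contra! hT
  obtain ⟨C, hS⟩ := logSol_of_classical hT hsol
  -- Points at which the initial density takes the values `-64 (1 - 2⁻ⁿ)`.
  have hy : ∀ n : ℕ, ∃ y ∈ Icc (0:ℝ) 1, Real.smoothTransition y = 1 - (1 / 2 : ℝ) ^ n := by
    intro n
    have h1 : (1 / 2 : ℝ) ^ n ≤ 1 := pow_le_one₀ (by norm_num) (by norm_num)
    have h2 : (0:ℝ) < (1 / 2 : ℝ) ^ n := by positivity
    exact intermediate_value_Icc zero_le_one Real.smoothTransition.continuous.continuousOn
      (by rw [Real.smoothTransition.zero, Real.smoothTransition.one]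
          exact ⟨by linarith, by linarith⟩)
  choose y hy01 hyv using hy
  have hylt : ∀ n, y n < y (n + 1) := fun n => by
    by_contra! hle
    have := Real.smoothTransition.monotone hle
    rw [hyv, hyv, pow_succ] at this
    have h2 : (0:ℝ) < (1 / 2 : ℝ) ^ n := by positivity
    linarith
  have hy1 : ∀ n, y n < 1 := fun n => (hylt n).trans_le (hy01 (n + 1)).2
  have hez : ∀ n, Real.exp (-(-Real.log ((3 - y n) / 4))) = (3 - y n) / 4 := fun n => by
    rw [neg_neg, Real.exp_log]; linarith [hy1 n]
  have hrval : ∀ n, ρ 0 (Real.exp (-(-Real.log ((3 - y n) / 4))))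
      = -(64 * (1 - (1 / 2 : ℝ) ^ n)) := fun n => by
    have a := hy1 n
    have b := (hy01 n).1
    rw [hez, (hinit _ ⟨by linarith, by linarith⟩).2, rhoInit_right (by linarith), ← hyv]
    ring_nf
  refine hS.no_solution (fun s => ?_) (zs := Real.log 2)
    (z := fun n => -Real.log ((3 - y n) / 4)) ?_ (fun n => ?_) (fun n => ?_) ?_ (fun n => ?_)
  · have := (hinit _ (exp_neg_mem (le_max_right s 0))).1
    simpa using this
  · exact neg_pos.2 (Real.log_neg (by linarith [hy1 0]) (by linarith [(hy01 0).1]))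
  · exact neg_lt_neg (Real.log_lt_log (by linarith [hy1 (n + 1)]) (by linarith [hylt n]))
  · rw [← Real.log_inv]
    refine Real.log_lt_log (inv_pos.2 (by linarith [hy1 n])) ?_
    rw [inv_lt_comm₀ (by linarith [hy1 n]) two_pos]
    linarith [hy1 n]
  · have hhalf : ∀ z ∈ Icc 0 (Real.log 2), 1 / 2 ≤ Real.exp (-z) := fun z hz => by
      have : Real.exp (-Real.log 2) = 1 / 2 := by
        rw [Real.exp_neg, Real.exp_log two_pos, one_div]
      rw [← this]
      exact Real.exp_le_exp.2 (by linarith [hz.2])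
    intro a ha b hb hab
    simp only
    rw [(hinit _ (exp_neg_mem ha.1)).2, (hinit _ (exp_neg_mem hb.1)).2,
      rhoInit_right (hhalf a ha), rhoInit_right (hhalf b hb)]
    have h1 : Real.exp (-b) ≤ Real.exp (-a) := Real.exp_le_exp.2 (by linarith)
    have := Real.smoothTransition.monotone
      (show 3 - 4 * Real.exp (-a) ≤ 3 - 4 * Real.exp (-b) by linarith)
    linarith
  · rw [hrval, hrval, pow_succ]
    ring
end

section
/- Let (ω₁,ρ₁) and (ω₂,ρ₂) be two classical solutions of the 1D model Boussinesq system on [0,T] with the same initial data (ω₀,ρ₀), such that for i=1,2 and every t ∈ [0,T], ω_i(t,·) and ρ_i(t,·) are continuously differentiable in x, vanish at x=0 and x=1, and sup_{t∈[0,T], x∈[0,1]} (|∂_x ω_i(t,x)| + |∂_x ρ_i(t,x)|) < ∞. Then (ω₁,ρ₁) = (ω₂,ρ₂) on [0,T]×[0,1]. -/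
open MeasureTheory Set

/-!
Write `w = ω₁ - ω₂`, `r = ρ₁ - ρ₂` and `Z = Ω₁ - Ω₂`. The equation for `w` contains `∂ₓr`, so the
pair `(w, r)` does not close in a sup norm. The remedy is to estimate one derivative less of the
vorticity: the pair `(V, r)` with `V = x Z = u₂ - u₁`. Since `∂ₓΩᵢ = -ωᵢ / x`, integrating `∂ₜw / y`
by parts over `[x,1]` gives

`∂ₜZ = -(Ω₁ w - ω₁ Z + r / x) + ∫_x^1 ((∂_yω₁ + ∂_yω₂) Z + r / y²) dy`   (`exists_deriv_Z`),

with no derivative of `w` or `r` left. The factor `x` in `V` is exactly what compensates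
`∫_x^1 dy / y² ≤ 1 / x`, so that `|∂ₜV + u₁ ∂ₓV|` is bounded by a multiple of `sup (|V| + |r|)`,
and the same holds for `∂ₜr + u₁ ∂ₓr = V ∂ₓρ₂`. Both `V` and `r` vanish on `x = 0`, `x = 1` and at
`t = 0`, hence a maximum principle (`max_principle`) applied to `e^{-Kt} max(|V|, |r|)` forces
`V = r = 0` (`diff_eq_zero`). Finally `Z = 0` gives `w = -x ∂ₓZ = 0`.

All this is carried out on `[0,T']` with `T' < T` and at points with `0 < x < 1`, where the
derivatives in the equations are those of functions differentiable in the ordinary two-sided sense;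
the boundary values of `x` and the time `T` are reached through the boundary conditions and
continuity.
-/

/-! ### A single solution -/

/-- The working form of the hypotheses on one solution `(ω, ρ)` on `[0,T] × [0,1]`: joint continuity
up to the boundary, and differentiability, the equations and a common bound `B` on the
`x`-derivatives at interior points only, where `deriv` is the genuine two-sided derivative.
The transport equations are written as time derivatives, with `-u = x Ω`. -/
structure Sol (ω ρ : ℝ → ℝ → ℝ) (T B : ℝ) : Prop where
  cω : ContinuousOn (fun p : ℝ × ℝ => ω p.1 p.2) (Icc 0 T ×ˢ Icc (0:ℝ) 1)
  cρ : ContinuousOn (fun p : ℝ × ℝ => ρ p.1 p.2) (Icc 0 T ×ˢ Icc (0:ℝ) 1)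
  ω0 : ∀ t ∈ Icc 0 T, ω t 0 = 0
  ω1 : ∀ t ∈ Icc 0 T, ω t 1 = 0
  ρ0 : ∀ t ∈ Icc 0 T, ρ t 0 = 0
  ρ1 : ∀ t ∈ Icc 0 T, ρ t 1 = 0
  bω : ∀ t ∈ Icc 0 T, ∀ x ∈ Ioo (0:ℝ) 1, |deriv (ω t) x| ≤ B
  bρ : ∀ t ∈ Icc 0 T, ∀ x ∈ Ioo (0:ℝ) 1, |deriv (ρ t) x| ≤ B
  dω : ∀ t ∈ Ioo 0 T, ∀ x ∈ Ioo (0:ℝ) 1, HasDerivAt (ω t) (deriv (ω t) x) x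
  dρ : ∀ t ∈ Ioo 0 T, ∀ x ∈ Ioo (0:ℝ) 1, HasDerivAt (ρ t) (deriv (ρ t) x) x
  tω : ∀ t ∈ Ioo 0 T, ∀ x ∈ Ioo (0:ℝ) 1,
    HasDerivAt (fun s => ω s x) (x * OmegaF ω t x * deriv (ω t) x + deriv (ρ t) x) t
  tρ : ∀ t ∈ Ioo 0 T, ∀ x ∈ Ioo (0:ℝ) 1,
    HasDerivAt (fun s => ρ s x) (x * OmegaF ω t x * deriv (ρ t) x) t
  lω : ∀ t ∈ Icc 0 T, ∀ x ∈ Icc (0:ℝ) 1, |ω t x| ≤ B * x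

/-- The linear bound `|ω(t,x)| ≤ B x` is the mean value theorem together with `ω(t,0) = 0`. -/
lemma exists_sol {ω ρ : ℝ → ℝ → ℝ} {T : ℝ} (hsol : IsClassicalSolution ω ρ (Icc 0 T))
    (hreg : ∀ t ∈ Icc (0:ℝ) T,
      ContDiffOn ℝ 1 (fun x => ω t x) (Icc (0:ℝ) 1) ∧
      ContDiffOn ℝ 1 (fun x => ρ t x) (Icc (0:ℝ) 1) ∧
      ω t 0 = 0 ∧ ω t 1 = 0 ∧ ρ t 0 = 0 ∧ ρ t 1 = 0)
    (B : ℝ) (hbd : ∀ t ∈ Icc (0:ℝ) T, ∀ x ∈ Icc (0:ℝ) 1,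
      |deriv (fun y => ω t y) x| + |deriv (fun y => ρ t y) x| ≤ B) : Sol ω ρ T B := by
  obtain ⟨h1, h2, h3⟩ := hsol
  have key : ∀ f : ℝ → ℝ → ℝ,
      ContDiffOn ℝ 1 (fun p : ℝ × ℝ => f p.1 p.2) (Icc 0 T ×ˢ Icc (0:ℝ) 1) →
      ∀ t ∈ Ioo 0 T, ∀ x ∈ Ioo (0:ℝ) 1,
        DifferentiableAt ℝ (f t) x ∧ DifferentiableAt ℝ (fun s => f s x) t := by
    intro f hf t ht x hx
    have hd : DifferentiableAt ℝ (fun p : ℝ × ℝ => f p.1 p.2) (t, x) :=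
      (hf.contDiffAt (prod_mem_nhds (Icc_mem_nhds ht.1 ht.2)
        (Icc_mem_nhds hx.1 hx.2))).differentiableAt one_ne_zero
    exact ⟨DifferentiableAt.comp (g := fun p : ℝ × ℝ => f p.1 p.2) (f := fun y : ℝ => (t, y)) x hd
        ((differentiableAt_const _).prodMk differentiableAt_id),
      DifferentiableAt.comp (g := fun p : ℝ × ℝ => f p.1 p.2) (f := fun s : ℝ => (s, x)) t hd
        (differentiableAt_id.prodMk (differentiableAt_const _))⟩
  have hbω : ∀ t ∈ Icc 0 T, ∀ x ∈ Icc (0:ℝ) 1, |deriv (ω t) x| ≤ B := fun t ht x hx =>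
    le_trans (le_add_of_nonneg_right (abs_nonneg _)) (hbd t ht x hx)
  refine ⟨h1.continuousOn, h2.continuousOn, fun t ht => (hreg t ht).2.2.1,
    fun t ht => (hreg t ht).2.2.2.1, fun t ht => (hreg t ht).2.2.2.2.1,
    fun t ht => (hreg t ht).2.2.2.2.2, fun t ht x hx => hbω t ht x (Ioo_subset_Icc_self hx),
    fun t ht x hx => le_trans (le_add_of_nonneg_left (abs_nonneg _))
      (hbd t ht x (Ioo_subset_Icc_self hx)),
    fun t ht x hx => (key ω h1 t ht x hx).1.hasDerivAt,
    fun t ht x hx => (key ρ h2 t ht x hx).1.hasDerivAt, ?_, ?_, ?_⟩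
  · intro t ht x hx
    have h := (key ω h1 t ht x hx).2.hasDerivAt
    have e := (h3 t (Ioo_subset_Icc_self ht) x (Ioo_subset_Icc_self hx)).2
    refine h.congr_deriv ?_
    rw [uF] at e
    linear_combination e
  · intro t ht x hx
    have h := (key ρ h2 t ht x hx).2.hasDerivAt
    have e := (h3 t (Ioo_subset_Icc_self ht) x (Ioo_subset_Icc_self hx)).1
    refine h.congr_deriv ?_
    rw [uF] at e
    linear_combination e
  · intro t ht x hx
    rcases hx.1.eq_or_lt with h0 | h0
    · subst h0
      simp [(hreg t ht).2.2.1]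
    have hc := (hreg t ht).1
    obtain ⟨c, hc1, hc2⟩ := exists_deriv_eq_slope (ω t) h0
      (hc.continuousOn.mono (Icc_subset_Icc_right hx.2)) (fun y hy =>
        ((hc.contDiffAt (Icc_mem_nhds hy.1 (hy.2.trans_le hx.2))).differentiableAt
          one_ne_zero).differentiableWithinAt)
    have hb := hbω t ht c ⟨hc1.1.le, hc1.2.le.trans hx.2⟩
    rwa [hc2, (hreg t ht).2.2.1, sub_zero, sub_zero, abs_div, abs_of_pos h0,
      div_le_iff₀ h0] at hb

namespace Sol

variable {ω ρ : ℝ → ℝ → ℝ} {T B : ℝ}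

lemma mono {B' : ℝ} (h : Sol ω ρ T B) (hB : B ≤ B') : Sol ω ρ T B' :=
  ⟨h.cω, h.cρ, h.ω0, h.ω1, h.ρ0, h.ρ1, fun t ht x hx => (h.bω t ht x hx).trans hB,
    fun t ht x hx => (h.bρ t ht x hx).trans hB, h.dω, h.dρ, h.tω, h.tρ,
    fun t ht x hx => (h.lω t ht x hx).trans (mul_le_mul_of_nonneg_right hB hx.1)⟩

lemma cω_x (h : Sol ω ρ T B) {t : ℝ} (ht : t ∈ Icc 0 T) : ContinuousOn (ω t) (Icc 0 1) :=
  h.cω.comp (f := fun x : ℝ => (t, x)) (by fun_prop) (fun _ hx => ⟨ht, hx⟩)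

lemma cρ_x (h : Sol ω ρ T B) {t : ℝ} (ht : t ∈ Icc 0 T) : ContinuousOn (ρ t) (Icc 0 1) :=
  h.cρ.comp (f := fun x : ℝ => (t, x)) (by fun_prop) (fun _ hx => ⟨ht, hx⟩)

lemma cω_t (h : Sol ω ρ T B) {x : ℝ} (hx : x ∈ Icc (0:ℝ) 1) :
    ContinuousOn (fun t => ω t x) (Icc 0 T) :=
  h.cω.comp (f := fun t : ℝ => (t, x)) (by fun_prop) (fun _ ht => ⟨ht, hx⟩)

lemma cρ_t (h : Sol ω ρ T B) {x : ℝ} (hx : x ∈ Icc (0:ℝ) 1) :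
    ContinuousOn (fun t => ρ t x) (Icc 0 T) :=
  h.cρ.comp (f := fun t : ℝ => (t, x)) (by fun_prop) (fun _ ht => ⟨ht, hx⟩)

lemma abs_div_le (h : Sol ω ρ T B) {t : ℝ} (ht : t ∈ Icc 0 T) {x : ℝ} (hx : x ∈ Ioc (0:ℝ) 1) :
    |ω t x / x| ≤ B := by
  rw [abs_div, abs_of_pos hx.1, div_le_iff₀ hx.1]
  exact h.lω t ht x (Ioc_subset_Icc_self hx)

lemma B_nonneg (h : Sol ω ρ T B) (hT : 0 ≤ T) : 0 ≤ B :=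
  (abs_nonneg _).trans (h.abs_div_le (t := 0) ⟨le_rfl, hT⟩ (x := 1) ⟨one_pos, le_rfl⟩)

lemma aesm (h : Sol ω ρ T B) {t : ℝ} (ht : t ∈ Icc 0 T) :
    AEStronglyMeasurable (fun y => ω t y / y) (volume.restrict (Ioc (0:ℝ) 1)) := by
  apply ContinuousOn.aestronglyMeasurable _ measurableSet_Ioc
  exact ((h.cω_x ht).mono Ioc_subset_Icc_self).div continuousOn_id (fun y hy => hy.1.ne')

lemma aesm' (h : Sol ω ρ T B) {t : ℝ} (ht : t ∈ Icc 0 T) {a b : ℝ} (ha : a ∈ Icc (0:ℝ) 1)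
    (hb : b ∈ Icc (0:ℝ) 1) :
    AEStronglyMeasurable (fun y => ω t y / y) (volume.restrict (uIoc a b)) :=
  (h.aesm ht).mono_measure (Measure.restrict_mono
    (Ioc_subset_Ioc (le_min ha.1 hb.1) (max_le ha.2 hb.2)) le_rfl)

lemma integrable_div (h : Sol ω ρ T B) {t : ℝ} (ht : t ∈ Icc 0 T) {a b : ℝ}
    (ha : a ∈ Icc (0:ℝ) 1) (hb : b ∈ Icc (0:ℝ) 1) :
    IntervalIntegrable (fun y => ω t y / y) volume a b := by
  have : IntervalIntegrable (fun _ : ℝ => B) volume a b := intervalIntegrable_const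
  refine this.mono_fun (h.aesm' ht ha hb) ?_
  filter_upwards [ae_restrict_mem measurableSet_uIoc] with y hy
  have hy' : y ∈ Ioc (0:ℝ) 1 := Ioc_subset_Ioc (le_min ha.1 hb.1) (max_le ha.2 hb.2) hy
  exact (h.abs_div_le ht hy').trans (le_abs_self B)

lemma omega_sub_le (h : Sol ω ρ T B) {t : ℝ} (ht : t ∈ Icc 0 T) {a b : ℝ}
    (ha : a ∈ Icc (0:ℝ) 1) (hb : b ∈ Icc (0:ℝ) 1) :
    |OmegaF ω t a - OmegaF ω t b| ≤ B * |a - b| := by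
  have h1 : (1:ℝ) ∈ Icc (0:ℝ) 1 := by simp
  have e : OmegaF ω t a - OmegaF ω t b = ∫ y in a..b, ω t y / y := by
    unfold OmegaF
    rw [← intervalIntegral.integral_add_adjacent_intervals (h.integrable_div ht ha hb)
      (h.integrable_div ht hb h1)]
    ring
  rw [e, abs_sub_comm a b, ← Real.norm_eq_abs]
  refine intervalIntegral.norm_integral_le_of_norm_le_const fun y hy => ?_
  exact h.abs_div_le ht (Ioc_subset_Ioc (le_min ha.1 hb.1) (max_le ha.2 hb.2) hy)

lemma omega_one (t : ℝ) : OmegaF ω t 1 = 0 := by simp [OmegaF]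

lemma omega_le (h : Sol ω ρ T B) {t : ℝ} (ht : t ∈ Icc 0 T) {x : ℝ} (hx : x ∈ Icc (0:ℝ) 1) :
    |OmegaF ω t x| ≤ B := by
  have := h.omega_sub_le ht hx (b := 1) (by simp)
  rw [omega_one, sub_zero, abs_sub_comm x 1, abs_of_nonneg (by linarith [hx.2] : (0:ℝ) ≤ 1 - x)] at this
  nlinarith [h.B_nonneg (ht.1.trans ht.2), hx.1]

/-- `Ω` is Lipschitz in `x`, uniformly in `t`, because `|ω(t,y)/y| ≤ B`; it is continuous in `t` by
dominated convergence. -/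
lemma continuousOn_omega (h : Sol ω ρ T B) :
    ContinuousOn (fun p : ℝ × ℝ => OmegaF ω p.1 p.2) (Icc 0 T ×ˢ Icc (0:ℝ) 1) := by
  refine continuousOn_prod_of_continuousOn_lipschitzOnWith' _ B.toNNReal ?_ ?_
  · intro t ht
    refine LipschitzOnWith.of_dist_le_mul fun a ha b hb => ?_
    rw [Real.coe_toNNReal _ (h.B_nonneg (ht.1.trans ht.2))]
    exact h.omega_sub_le ht ha hb
  · intro x hx t ht
    have h1 : (1:ℝ) ∈ Icc (0:ℝ) 1 := by simp
    have hsub : uIoc x 1 ⊆ Ioc 0 1 := Ioc_subset_Ioc (le_min hx.1 zero_le_one) (max_le hx.2 le_rfl)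
    refine intervalIntegral.continuousWithinAt_of_dominated_interval (bound := fun _ => B)
      ?_ ?_ intervalIntegrable_const ?_
    · filter_upwards [self_mem_nhdsWithin] with s hs using h.aesm' hs hx h1
    · filter_upwards [self_mem_nhdsWithin] with s hs
      exact Filter.Eventually.of_forall fun y hy => h.abs_div_le hs (hsub hy)
    · exact Filter.Eventually.of_forall fun y hy =>
        (h.cω_t (Ioc_subset_Icc_self (hsub hy)) t ht).div_const _

lemma cΩ_x (h : Sol ω ρ T B) {t : ℝ} (ht : t ∈ Icc 0 T) :
    ContinuousOn (OmegaF ω t) (Icc 0 1) :=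
  h.continuousOn_omega.comp (f := fun x : ℝ => (t, x)) (by fun_prop) (fun _ hx => ⟨ht, hx⟩)

lemma hasDerivAt_omega_x (h : Sol ω ρ T B) {t : ℝ} (ht : t ∈ Icc 0 T) {x : ℝ}
    (hx : x ∈ Ioo (0:ℝ) 1) : HasDerivAt (OmegaF ω t) (-(ω t x / x)) x := by
  have hc : ContinuousOn (fun y => ω t y / y) (Ioo 0 1) :=
    ((h.cω_x ht).mono Ioo_subset_Icc_self).div continuousOn_id (fun y hy => hy.1.ne')
  exact intervalIntegral.integral_hasDerivAt_left
    (h.integrable_div ht (Ioo_subset_Icc_self hx) (by simp))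
    (hc.stronglyMeasurableAtFilter isOpen_Ioo x hx) (hc.continuousAt (Ioo_mem_nhds hx.1 hx.2))

/-- Differentiation under the integral sign; the integrand on the right is `∂ₜω / y`, rewritten by
the equation as `Ω ∂ₓω + ∂ₓρ / y`, which is bounded for `y` away from `0`. -/
lemma hasDerivAt_omega_t (h : Sol ω ρ T B) {t : ℝ} (ht : t ∈ Ioo 0 T) {x : ℝ}
    (hx : x ∈ Ioo (0:ℝ) 1) :
    IntervalIntegrable (fun y => OmegaF ω t y * deriv (ω t) y + deriv (ρ t) y / y) volume x 1 ∧
    HasDerivAt (fun s => OmegaF ω s x)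
      (∫ y in x..1, (OmegaF ω t y * deriv (ω t) y + deriv (ρ t) y / y)) t := by
  have h1 : (1:ℝ) ∈ Icc (0:ℝ) 1 := by simp
  have hx' := Ioo_subset_Icc_self hx
  have hu : uIoc x 1 = Ioc x 1 := uIoc_of_le hx.2.le
  have hB := h.B_nonneg (ht.1.trans ht.2).le
  have hne : ∀ᵐ y : ℝ, y ≠ 1 := by simp [ae_iff]
  have hin : ∀ y ∈ uIoc x 1, y ≠ 1 → y ∈ Ioo (0:ℝ) 1 ∧ x < y := by
    intro y hy hy1
    rw [hu] at hy
    exact ⟨⟨hx.1.trans hy.1, lt_of_le_of_ne hy.2 hy1⟩, hy.1⟩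
  refine intervalIntegral.hasDerivAt_integral_of_dominated_loc_of_deriv_le
    (F := fun s y => ω s y / y)
    (F' := fun s y => OmegaF ω s y * deriv (ω s) y + deriv (ρ s) y / y)
    (bound := fun _ => B * B + B / x) (s := Ioo 0 T) (Ioo_mem_nhds ht.1 ht.2)
    ?_ (h.integrable_div (Ioo_subset_Icc_self ht) hx' h1) ?_ ?_ intervalIntegrable_const ?_
  · filter_upwards [Ioo_mem_nhds ht.1 ht.2] with s hs
    exact h.aesm' (Ioo_subset_Icc_self hs) hx' h1
  · rw [hu]
    refine ((((h.cΩ_x (Ioo_subset_Icc_self ht)).mono ?_).aestronglyMeasurable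
      measurableSet_Ioc).mul (measurable_deriv _).aestronglyMeasurable).add
      (((measurable_deriv _).div measurable_id).aestronglyMeasurable)
    exact fun y hy => ⟨(hx.1.trans hy.1).le, hy.2⟩
  · filter_upwards [hne] with y hy1 hy s hs
    obtain ⟨hy, hxy⟩ := hin y hy hy1
    have hs' := Ioo_subset_Icc_self hs
    refine (norm_add_le _ _).trans (add_le_add ?_ ?_)
    · rw [norm_mul]
      exact mul_le_mul (h.omega_le hs' (Ioo_subset_Icc_self hy)) (h.bω s hs' y hy)
        (norm_nonneg _) hB
    · rw [norm_div, Real.norm_eq_abs, Real.norm_eq_abs, abs_of_pos hy.1]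
      exact div_le_div₀ hB (h.bρ s hs' y hy) hx.1 hxy.le
  · filter_upwards [hne] with y hy1 hy s hs
    obtain ⟨hy, -⟩ := hin y hy hy1
    have hy0 := hy.1.ne'
    exact ((h.tω s hs y hy).div_const y).congr_deriv (by field_simp)

end Sol

/-! ### The maximum principle -/

lemma deriv_nonneg_of_left_max {g : ℝ → ℝ} {g' a : ℝ} (h : HasDerivAt g g' a)
    (hg : ∀ᶠ s in nhdsWithin a (Iio a), g s ≤ g a) : 0 ≤ g' := by
  refine ge_of_tendsto (hasDerivAt_iff_tendsto_slope_left_right.1 h).1 ?_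
  filter_upwards [hg, self_mem_nhdsWithin] with s hs hsa
  have hsa' : s < a := hsa
  rw [slope_def_field]
  exact div_nonneg_of_nonpos (by linarith) (by linarith)

lemma max_aux {f : ℝ → ℝ → ℝ} {K m t₀ x₀ ft fx : ℝ} (ht₀ : 0 < t₀) (hx₀ : x₀ ∈ Ioo (0:ℝ) 1)
    (hle : ∀ t ∈ Icc 0 t₀, ∀ x ∈ Icc (0:ℝ) 1, f t x ≤ Real.exp (K * (t - t₀)) * m)
    (heq : f t₀ x₀ = m) (hft : HasDerivAt (fun s => f s x₀) ft t₀)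
    (hfx : HasDerivAt (f t₀) fx x₀) : fx = 0 ∧ K * m ≤ ft := by
  constructor
  · refine IsLocalMax.hasDerivAt_eq_zero (f := f t₀) ?_ hfx
    filter_upwards [Icc_mem_nhds hx₀.1 hx₀.2] with x hx
    simpa [heq] using hle t₀ ⟨ht₀.le, le_rfl⟩ x hx
  · have he : HasDerivAt (fun s => Real.exp (K * (s - t₀)) * m) (K * m) t₀ := by
      have := ((((hasDerivAt_id t₀).sub_const t₀).const_mul K).exp).mul_const m
      simpa using this
    have := deriv_nonneg_of_left_max (hft.sub he) (by
      filter_upwards [Ioo_mem_nhdsLT ht₀] with s hs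
      simpa [heq] using hle s ⟨hs.1.le, hs.2.le⟩ x₀ (Ioo_subset_Icc_self hx₀))
    linarith

/-- Maximum principle: at a point `(t₀, x₀)` where `e^{-Kt} |f|` is maximal over
`[0,t₀] × [0,1]`, with `x₀` interior, `f` is critical in `x` and `|∂ₜf| ≥ K |f|`. -/
lemma max_principle {f : ℝ → ℝ → ℝ} {K m t₀ x₀ ft fx : ℝ} (ht₀ : 0 < t₀)
    (hx₀ : x₀ ∈ Ioo (0:ℝ) 1)
    (hle : ∀ t ∈ Icc 0 t₀, ∀ x ∈ Icc (0:ℝ) 1, |f t x| ≤ Real.exp (K * (t - t₀)) * m)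
    (heq : |f t₀ x₀| = m) (hft : HasDerivAt (fun s => f s x₀) ft t₀)
    (hfx : HasDerivAt (f t₀) fx x₀) : fx = 0 ∧ K * m ≤ |ft| := by
  rcases abs_choice (f t₀ x₀) with h | h
  · have := max_aux ht₀ hx₀ (fun t ht x hx => (le_abs_self _).trans (hle t ht x hx))
      (h.symm.trans heq) hft hfx
    exact ⟨this.1, this.2.trans (le_abs_self _)⟩
  · have := max_aux (f := fun t x => -f t x) ht₀ hx₀
      (fun t ht x hx => (neg_le_abs _).trans (hle t ht x hx)) (h.symm.trans heq) hft.neg hfx.neg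
    exact ⟨by linarith [this.1], this.2.trans (neg_le_abs _)⟩

/-! ### The difference of two solutions -/

section Pair

variable {ω₁ ρ₁ ω₂ ρ₂ : ℝ → ℝ → ℝ} {T B : ℝ}

/-- Time derivative `D` of `Z = Ω₁ - Ω₂`. With `w = ω₁ - ω₂` and `r = ρ₁ - ρ₂`, integrating
`∂ₜw / y` by parts moves all derivatives off `w` and `r`:
`D = -(Ω₁ w - ω₁ Z + r / x) + ∫_x^1 ((∂_yω₁ + ∂_yω₂) Z + r / y²) dy`.
If `|r|` and `|y Z|` are at most `m` at time `t`, the integrand is at most `(2B+1) m / y²`, so the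
last term is `O(m / x)`. -/
lemma exists_deriv_Z (h₁ : Sol ω₁ ρ₁ T B) (h₂ : Sol ω₂ ρ₂ T B) {t x m : ℝ} (ht : t ∈ Ioo 0 T)
    (hx : x ∈ Ioo (0:ℝ) 1)
    (hr : ∀ y ∈ Icc (0:ℝ) 1, |ρ₁ t y - ρ₂ t y| ≤ m)
    (hV : ∀ y ∈ Icc (0:ℝ) 1, |y * (OmegaF ω₁ t y - OmegaF ω₂ t y)| ≤ m) :
    ∃ D, HasDerivAt (fun s => OmegaF ω₁ s x - OmegaF ω₂ s x) D t ∧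
      |x * (D + (OmegaF ω₁ t x * (ω₁ t x - ω₂ t x)
        - ω₁ t x * (OmegaF ω₁ t x - OmegaF ω₂ t x) + (ρ₁ t x - ρ₂ t x) / x))|
        ≤ (2 * B + 1) * m := by
  have htc := Ioo_subset_Icc_self ht
  have hB := h₁.B_nonneg (ht.1.trans ht.2).le
  have hm : 0 ≤ m := (abs_nonneg _).trans (hr 0 (by simp))
  have hu : uIoc x 1 = Ioc x 1 := uIoc_of_le hx.2.le
  have hsub : Icc x 1 ⊆ Icc 0 1 := Icc_subset_Icc_left hx.1.le
  have hsub' : Ioc x 1 ⊆ Icc 0 1 := Ioc_subset_Icc_self.trans hsub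
  obtain ⟨i₁, d₁⟩ := h₁.hasDerivAt_omega_t ht hx
  obtain ⟨i₂, d₂⟩ := h₂.hasDerivAt_omega_t ht hx
  set G₁ : ℝ → ℝ := fun y => OmegaF ω₁ t y * deriv (ω₁ t) y + deriv (ρ₁ t) y / y with hG₁
  set G₂ : ℝ → ℝ := fun y => OmegaF ω₂ t y * deriv (ω₂ t) y + deriv (ρ₂ t) y / y with hG₂
  set P : ℝ → ℝ := fun y => (deriv (ω₁ t) y + deriv (ω₂ t) y) *
    (OmegaF ω₁ t y - OmegaF ω₂ t y) + (ρ₁ t y - ρ₂ t y) / y ^ 2 with hP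
  set H : ℝ → ℝ := fun y => OmegaF ω₁ t y * (ω₁ t y - ω₂ t y)
        - ω₁ t y * (OmegaF ω₁ t y - OmegaF ω₂ t y) + (ρ₁ t y - ρ₂ t y) / y with hH
  set Q : ℝ → ℝ := fun y => (2 * B + 1) * m / y ^ 2 with hQ
  have cQ : ContinuousOn Q (Icc x 1) := by
    refine continuousOn_const.div (by fun_prop) fun y hy => ?_
    have : 0 < y := hx.1.trans_le hy.1
    positivity
  have iQ : IntervalIntegrable Q volume x 1 := by
    apply ContinuousOn.intervalIntegrable
    rwa [uIcc_of_le hx.2.le]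
  have hne : ∀ᵐ y : ℝ, y ≠ 1 := by simp [ae_iff]
  have hPQ : ∀ᵐ y : ℝ, y ∈ Ioc x 1 → ‖P y‖ ≤ Q y := by
    filter_upwards [hne] with y hy1 hy
    have hy0 : 0 < y := hx.1.trans hy.1
    have hy' : y ∈ Ioo (0:ℝ) 1 := ⟨hy0, lt_of_le_of_ne hy.2 hy1⟩
    have a1 := h₁.bω t htc y hy'
    have a2 := h₂.bω t htc y hy'
    have a3 := hV y (Ioo_subset_Icc_self hy')
    have a4 := hr y (Ioo_subset_Icc_self hy')
    have e : P y = ((deriv (ω₁ t) y + deriv (ω₂ t) y) * y *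
        (y * (OmegaF ω₁ t y - OmegaF ω₂ t y)) + (ρ₁ t y - ρ₂ t y)) / y ^ 2 := by
      simp only [hP]; field_simp
    rw [e, Real.norm_eq_abs, abs_div, abs_of_pos (by positivity : 0 < y ^ 2)]
    refine div_le_div_of_nonneg_right ?_ (by positivity)
    refine (abs_add_le _ _).trans ?_
    rw [abs_mul]
    have a5 : |(deriv (ω₁ t) y + deriv (ω₂ t) y) * y| ≤ 2 * B := by
      rw [abs_mul, abs_of_pos hy0]
      have := (abs_add_le (deriv (ω₁ t) y) (deriv (ω₂ t) y)).trans (add_le_add a1 a2)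
      calc _ ≤ (B + B) * 1 := mul_le_mul this hy.2 hy0.le (by linarith)
        _ = 2 * B := by ring
    have := mul_le_mul a5 a3 (abs_nonneg _) (by linarith)
    linarith
  have iP : IntervalIntegrable P volume x 1 := by
    refine iQ.mono_fun ?_ ?_
    · rw [hu]
      refine ((((measurable_deriv _).add (measurable_deriv _)).aestronglyMeasurable).mul
        ((((h₁.cΩ_x htc).sub (h₂.cΩ_x htc)).mono hsub').aestronglyMeasurable
          measurableSet_Ioc)).add ?_
      refine ContinuousOn.aestronglyMeasurable ?_ measurableSet_Ioc
      refine (((h₁.cρ_x htc).sub (h₂.cρ_x htc)).mono hsub').div (by fun_prop) fun y hy => ?_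
      have : 0 < y := hx.1.trans hy.1
      positivity
    · rw [hu]
      filter_upwards [ae_restrict_mem measurableSet_Ioc, ae_restrict_of_ae hPQ] with y hy h
      exact (h hy).trans (le_abs_self _)
  have hH1 : H 1 = 0 := by
    simp [hH, Sol.omega_one, h₁.ρ1 t htc, h₂.ρ1 t htc]
  have FH : ∫ y in x..1, (G₁ y - G₂ y - P y) = H 1 - H x := by
    refine intervalIntegral.integral_eq_sub_of_hasDerivAt_of_le hx.2.le ?_ ?_ ((i₁.sub i₂).sub iP)
    · have c1 := (h₁.cΩ_x htc).mono hsub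
      have c2 := (h₂.cΩ_x htc).mono hsub
      have c3 := (h₁.cω_x htc).mono hsub
      have c4 := (h₂.cω_x htc).mono hsub
      have c5 := (h₁.cρ_x htc).mono hsub
      have c6 := (h₂.cρ_x htc).mono hsub
      exact ((c1.mul (c3.sub c4)).sub (c3.mul (c1.sub c2))).add
        ((c5.sub c6).div continuousOn_id fun y hy => (hx.1.trans_le hy.1).ne')
    · intro y hy
      have hy' : y ∈ Ioo (0:ℝ) 1 := ⟨hx.1.trans hy.1, hy.2⟩
      have hy0 : y ≠ 0 := hy'.1.ne'
      have c1 := h₁.hasDerivAt_omega_x htc hy'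
      have c2 := h₂.hasDerivAt_omega_x htc hy'
      have c3 := h₁.dω t ht y hy'
      have c4 := h₂.dω t ht y hy'
      have c5 := h₁.dρ t ht y hy'
      have c6 := h₂.dρ t ht y hy'
      refine (((c1.mul (c3.sub c4)).sub (c3.mul (c1.sub c2))).add
        ((c5.sub c6).div (hasDerivAt_id y) hy0)).congr_deriv ?_
      simp only [hG₁, hG₂, hP, id, Pi.sub_apply]
      field_simp
      ring
  have FQ : ∫ y in x..1, Q y = (2 * B + 1) * m * (1 / x - 1) := by
    rw [intervalIntegral.integral_eq_sub_of_hasDerivAt_of_le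
      (f := fun y => -((2 * B + 1) * m / y)) hx.2.le ?_ ?_ iQ]
    · field_simp; ring
    · exact (continuousOn_const.div continuousOn_id fun y hy => (hx.1.trans_le hy.1).ne').neg
    · intro y hy
      have hy0 : y ≠ 0 := (hx.1.trans hy.1).ne'
      refine (((hasDerivAt_const y ((2 * B + 1) * m)).div (hasDerivAt_id y) hy0).neg).congr_deriv ?_
      simp only [hQ, id]
      ring
  refine ⟨_, d₁.sub d₂, ?_⟩
  rw [intervalIntegral.integral_sub (i₁.sub i₂) iP, intervalIntegral.integral_sub i₁ i₂, hH1] at FH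
  have e : (∫ y in x..1, G₁ y) - (∫ y in x..1, G₂ y) + H x = ∫ y in x..1, P y := by linarith
  change |x * ((∫ y in x..1, G₁ y) - (∫ y in x..1, G₂ y) + H x)| ≤ _
  have b := intervalIntegral.norm_integral_le_of_norm_le hx.2.le hPQ iQ
  rw [FQ, Real.norm_eq_abs] at b
  rw [e, abs_mul, abs_of_pos hx.1]
  have hx0 := hx.1
  calc x * |∫ y in x..1, P y| ≤ x * ((2 * B + 1) * m * (1 / x - 1)) :=
        mul_le_mul_of_nonneg_left b hx.1.le
    _ = (2 * B + 1) * m * (1 - x) := by field_simp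
    _ ≤ (2 * B + 1) * m := mul_le_of_le_one_right (by positivity) (by linarith)

/-- On `[0,T']` with `T' < T`, where the equations hold with genuine time derivatives, both
`r = ρ₁ - ρ₂` and `V = x (Ω₁ - Ω₂)` vanish: a positive maximum of `e^{-(4B+3)t} max(|r|, |V|)`
would contradict the maximum principle. -/
lemma diff_eq_zero (h₁ : Sol ω₁ ρ₁ T B) (h₂ : Sol ω₂ ρ₂ T B)
    (hinit : ∀ x ∈ Icc (0:ℝ) 1, ω₁ 0 x = ω₂ 0 x ∧ ρ₁ 0 x = ρ₂ 0 x) {T' : ℝ} (hT' : T' < T)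
    {t x : ℝ} (ht : t ∈ Icc 0 T') (hx : x ∈ Icc (0:ℝ) 1) :
    ρ₁ t x - ρ₂ t x = 0 ∧ x * (OmegaF ω₁ t x - OmegaF ω₂ t x) = 0 := by
  set r : ℝ → ℝ → ℝ := fun t x => ρ₁ t x - ρ₂ t x with hr
  set V : ℝ → ℝ → ℝ := fun t x => x * (OmegaF ω₁ t x - OmegaF ω₂ t x) with hV
  set K : ℝ := 4 * B + 3 with hK
  have hS : Icc 0 T' ×ˢ Icc (0:ℝ) 1 ⊆ Icc 0 T ×ˢ Icc (0:ℝ) 1 :=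
    prod_mono (Icc_subset_Icc_right hT'.le) le_rfl
  have hB := h₁.B_nonneg ((ht.1.trans ht.2).trans hT'.le)
  have hcr : ContinuousOn (fun p : ℝ × ℝ => r p.1 p.2) (Icc 0 T' ×ˢ Icc (0:ℝ) 1) :=
    (h₁.cρ.sub h₂.cρ).mono hS
  have hcV : ContinuousOn (fun p : ℝ × ℝ => V p.1 p.2) (Icc 0 T' ×ˢ Icc (0:ℝ) 1) :=
    continuousOn_snd.mul ((h₁.continuousOn_omega.sub h₂.continuousOn_omega).mono hS)
  have hc : ContinuousOn (fun p : ℝ × ℝ => Real.exp (-K * p.1) * max |r p.1 p.2| |V p.1 p.2|)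
      (Icc 0 T' ×ˢ Icc (0:ℝ) 1) :=
    (by fun_prop : Continuous fun p : ℝ × ℝ => Real.exp (-K * p.1)).continuousOn.mul
      (ContinuousOn.sup hcr.abs hcV.abs)
  obtain ⟨⟨t₀, x₀⟩, ⟨ht₀, hx₀⟩, hmax⟩ :=
    (isCompact_Icc.prod isCompact_Icc).exists_isMaxOn ⟨(t, x), ht, hx⟩ hc
  simp only at ht₀ hx₀
  set m := max |r t₀ x₀| |V t₀ x₀| with hm
  have hle : ∀ t ∈ Icc 0 T', ∀ x ∈ Icc (0:ℝ) 1,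
      max |r t x| |V t x| ≤ Real.exp (K * (t - t₀)) * m := by
    intro s hs y hy
    have h : Real.exp (-K * s) * max |r s y| |V s y| ≤ Real.exp (-K * t₀) * m :=
      hmax (show (s, y) ∈ Icc 0 T' ×ˢ Icc (0:ℝ) 1 from ⟨hs, hy⟩)
    have h' := mul_le_mul_of_nonneg_left h (Real.exp_pos (K * s)).le
    rw [← mul_assoc, ← mul_assoc, ← Real.exp_add, ← Real.exp_add] at h'
    rw [show K * s + -K * s = 0 by ring, Real.exp_zero, one_mul,
      show K * s + -K * t₀ = K * (s - t₀) by ring] at h'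
    exact h'
  suffices hm0 : m ≤ 0 by
    have h := (hle t ht x hx).trans (mul_nonpos_of_nonneg_of_nonpos (Real.exp_pos _).le hm0)
    exact ⟨abs_nonpos_iff.1 ((le_max_left _ _).trans h),
      abs_nonpos_iff.1 ((le_max_right _ _).trans h)⟩
  by_contra! hmpos
  have htT : t₀ ∈ Icc 0 T := ⟨ht₀.1, ht₀.2.trans hT'.le⟩
  have hne : ¬ (r t₀ x₀ = 0 ∧ V t₀ x₀ = 0) := by
    rintro ⟨e1, e2⟩
    rw [hm, e1, e2] at hmpos
    simp at hmpos
  have hx0 : 0 < x₀ := by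
    refine lt_of_le_of_ne hx₀.1 ?_
    rintro rfl
    exact hne ⟨by simp [hr, h₁.ρ0 t₀ htT, h₂.ρ0 t₀ htT], by simp [hV]⟩
  have hx1 : x₀ < 1 := by
    refine lt_of_le_of_ne hx₀.2 ?_
    rintro rfl
    exact hne ⟨by simp [hr, h₁.ρ1 t₀ htT, h₂.ρ1 t₀ htT], by simp [hV, Sol.omega_one]⟩
  have ht0 : 0 < t₀ := by
    refine lt_of_le_of_ne ht₀.1 ?_
    rintro rfl
    refine hne ⟨by simp [hr, (hinit x₀ hx₀).2], ?_⟩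
    have : OmegaF ω₁ 0 x₀ = OmegaF ω₂ 0 x₀ := by
      refine intervalIntegral.integral_congr fun y hy => ?_
      rw [uIcc_of_le hx1.le] at hy
      simp only [(hinit y ⟨hx0.le.trans hy.1, hy.2⟩).1]
    simp [hV, this]
  have hxo : x₀ ∈ Ioo (0:ℝ) 1 := ⟨hx0, hx1⟩
  have hto : t₀ ∈ Ioo 0 T := ⟨ht0, ht₀.2.trans_lt hT'⟩
  have hle' : ∀ t ∈ Icc 0 t₀, ∀ x ∈ Icc (0:ℝ) 1,
      max |r t x| |V t x| ≤ Real.exp (K * (t - t₀)) * m :=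
    fun s hs y hy => hle s ⟨hs.1, hs.2.trans ht₀.2⟩ y hy
  have hbd : ∀ y ∈ Icc (0:ℝ) 1, |r t₀ y| ≤ m ∧ |V t₀ y| ≤ m := by
    intro y hy
    have h := hle t₀ ht₀ y hy
    rw [sub_self, mul_zero, Real.exp_zero, one_mul] at h
    exact ⟨(le_max_left _ _).trans h, (le_max_right _ _).trans h⟩
  rcases max_choice |r t₀ x₀| |V t₀ x₀| with hcase | hcase
  · -- Maximum attained by `r`: where `∂ₓr = 0`, the transport equation reads `∂ₜr = V ∂ₓρ₂`.
    obtain ⟨e1, e2⟩ := max_principle ht0 hxo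
      (fun s hs y hy => (le_max_left _ _).trans (hle' s hs y hy)) (hcase.symm.trans hm.symm)
      ((h₁.tρ t₀ hto x₀ hxo).sub (h₂.tρ t₀ hto x₀ hxo))
      ((h₁.dρ t₀ hto x₀ hxo).sub (h₂.dρ t₀ hto x₀ hxo))
    have e3 : x₀ * OmegaF ω₁ t₀ x₀ * deriv (ρ₁ t₀) x₀ - x₀ * OmegaF ω₂ t₀ x₀ * deriv (ρ₂ t₀) x₀
        = V t₀ x₀ * deriv (ρ₂ t₀) x₀ := by
      simp only [hV]
      linear_combination x₀ * OmegaF ω₁ t₀ x₀ * e1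
    rw [e3, abs_mul] at e2
    have := mul_le_mul (hbd x₀ hx₀).2 (h₂.bρ t₀ htT x₀ hxo) (abs_nonneg _) hmpos.le
    nlinarith
  · -- Maximum attained by `V`: there `∂ₓV = 0` means `Ω₁ - Ω₂ = ω₁ - ω₂`, which turns every
    -- boundary term of `x ∂ₜ(Ω₁ - Ω₂)` into a bounded multiple of `V` or `r`.
    obtain ⟨D, hD, hDle⟩ := exists_deriv_Z h₁ h₂ hto hxo (fun y hy => (hbd y hy).1)
      (fun y hy => (hbd y hy).2)
    obtain ⟨e1, e2⟩ := max_principle ht0 hxo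
      (fun s hs y hy => (le_max_right _ _).trans (hle' s hs y hy)) (hcase.symm.trans hm.symm)
      (hD.const_mul x₀)
      ((hasDerivAt_id x₀).mul ((h₁.hasDerivAt_omega_x htT hxo).sub
        (h₂.hasDerivAt_omega_x htT hxo)))
    have e3 : OmegaF ω₁ t₀ x₀ - OmegaF ω₂ t₀ x₀ = ω₁ t₀ x₀ - ω₂ t₀ x₀ := by
      simp only [id] at e1
      field_simp at e1
      linarith
    set A := OmegaF ω₁ t₀ x₀ * (ω₁ t₀ x₀ - ω₂ t₀ x₀)
        - ω₁ t₀ x₀ * (OmegaF ω₁ t₀ x₀ - OmegaF ω₂ t₀ x₀) + (ρ₁ t₀ x₀ - ρ₂ t₀ x₀) / x₀ with hA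
    have e4 : x₀ * A = (OmegaF ω₁ t₀ x₀ - ω₁ t₀ x₀) * V t₀ x₀ + r t₀ x₀ := by
      simp only [hA, hV, hr, ← e3]
      field_simp
    have b1 : |OmegaF ω₁ t₀ x₀ - ω₁ t₀ x₀| ≤ 2 * B := by
      have := h₁.lω t₀ htT x₀ hx₀
      have := h₁.omega_le htT hx₀
      have := abs_sub (OmegaF ω₁ t₀ x₀) (ω₁ t₀ x₀)
      nlinarith
    have b2 : |x₀ * A| ≤ 2 * B * m + m := by
      rw [e4]
      refine (abs_add_le _ _).trans (add_le_add ?_ (hbd x₀ hx₀).1)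
      rw [abs_mul]
      exact mul_le_mul b1 (hbd x₀ hx₀).2 (abs_nonneg _) (by linarith)
    have b3 := abs_sub (x₀ * (D + A)) (x₀ * A)
    rw [show x₀ * (D + A) - x₀ * A = x₀ * D by ring] at b3
    nlinarith

lemma eq_of_lt (h₁ : Sol ω₁ ρ₁ T B) (h₂ : Sol ω₂ ρ₂ T B)
    (hinit : ∀ x ∈ Icc (0:ℝ) 1, ω₁ 0 x = ω₂ 0 x ∧ ρ₁ 0 x = ρ₂ 0 x)
    {t x : ℝ} (ht : t ∈ Ico 0 T) (hx : x ∈ Icc (0:ℝ) 1) :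
    ω₁ t x = ω₂ t x ∧ ρ₁ t x = ρ₂ t x := by
  have key := fun y hy => diff_eq_zero h₁ h₂ hinit ht.2 (t := t) (x := y) ⟨ht.1, le_rfl⟩ hy
  have htc := Ico_subset_Icc_self ht
  refine ⟨?_, sub_eq_zero.1 (key x hx).1⟩
  rcases hx.1.eq_or_lt with h0 | h0
  · subst h0
    rw [h₁.ω0 t htc, h₂.ω0 t htc]
  rcases hx.2.eq_or_lt with h1 | h1
  · subst h1
    rw [h₁.ω1 t htc, h₂.ω1 t htc]
  -- `Ω₁ - Ω₂` vanishes near `x`, hence so does its derivative `-(ω₁ - ω₂) / x`.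
  have hd := (h₁.hasDerivAt_omega_x htc ⟨h0, h1⟩).sub (h₂.hasDerivAt_omega_x htc ⟨h0, h1⟩)
  have hz : (OmegaF ω₁ t - OmegaF ω₂ t) =ᶠ[nhds x] fun _ => 0 := by
    filter_upwards [Ioo_mem_nhds h0 h1] with y hy
    exact (mul_eq_zero.1 (key y (Ioo_subset_Icc_self hy)).2).resolve_left hy.1.ne'
  have e := hd.unique ((hasDerivAt_const x (0:ℝ)).congr_of_eventuallyEq hz)
  field_simp at e
  linarith

end Pair

/-- **Uniqueness.** Two classical solutions on `[0,T]` with the same initial data,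
which are `C¹` in `x`, vanish at `x = 0, 1`, and have uniformly bounded `∂_x ω`
and `∂_x ρ`, coincide on `[0,T] × [0,1]`. -/
theorem uniqueness (T : ℝ) (hT : 0 ≤ T) (ω₁ ρ₁ ω₂ ρ₂ : ℝ → ℝ → ℝ)
    (hsol₁ : IsClassicalSolution ω₁ ρ₁ (Icc 0 T))
    (hsol₂ : IsClassicalSolution ω₂ ρ₂ (Icc 0 T))
    (hinit : ∀ x ∈ Icc (0:ℝ) 1, ω₁ 0 x = ω₂ 0 x ∧ ρ₁ 0 x = ρ₂ 0 x)
    (hreg₁ : ∀ t ∈ Icc (0:ℝ) T,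
      ContDiffOn ℝ 1 (fun x => ω₁ t x) (Icc (0:ℝ) 1) ∧
      ContDiffOn ℝ 1 (fun x => ρ₁ t x) (Icc (0:ℝ) 1) ∧
      ω₁ t 0 = 0 ∧ ω₁ t 1 = 0 ∧ ρ₁ t 0 = 0 ∧ ρ₁ t 1 = 0)
    (hreg₂ : ∀ t ∈ Icc (0:ℝ) T,
      ContDiffOn ℝ 1 (fun x => ω₂ t x) (Icc (0:ℝ) 1) ∧
      ContDiffOn ℝ 1 (fun x => ρ₂ t x) (Icc (0:ℝ) 1) ∧
      ω₂ t 0 = 0 ∧ ω₂ t 1 = 0 ∧ ρ₂ t 0 = 0 ∧ ρ₂ t 1 = 0)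
    (hbd₁ : ∃ B : ℝ, ∀ t ∈ Icc (0:ℝ) T, ∀ x ∈ Icc (0:ℝ) 1,
      |deriv (fun y => ω₁ t y) x| + |deriv (fun y => ρ₁ t y) x| ≤ B)
    (hbd₂ : ∃ B : ℝ, ∀ t ∈ Icc (0:ℝ) T, ∀ x ∈ Icc (0:ℝ) 1,
      |deriv (fun y => ω₂ t y) x| + |deriv (fun y => ρ₂ t y) x| ≤ B) :
    ∀ t ∈ Icc (0:ℝ) T, ∀ x ∈ Icc (0:ℝ) 1,
      ω₁ t x = ω₂ t x ∧ ρ₁ t x = ρ₂ t x := by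
  obtain ⟨B₁, hB₁⟩ := hbd₁
  obtain ⟨B₂, hB₂⟩ := hbd₂
  have h₁ := (exists_sol hsol₁ hreg₁ B₁ hB₁).mono (le_max_left B₁ B₂)
  have h₂ := (exists_sol hsol₂ hreg₂ B₂ hB₂).mono (le_max_right B₁ B₂)
  intro t ht x hx
  rcases hT.eq_or_lt with h0 | h0
  · obtain rfl : t = 0 := le_antisymm (ht.2.trans h0.ge) ht.1
    exact hinit x hx
  -- Equality on `[0,T)` extends to `t = T` by continuity in time.
  have hcl : Icc 0 T ⊆ closure (Ico 0 T) := by rw [closure_Ico h0.ne]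
  have eω : EqOn (fun t => ω₁ t x) (fun t => ω₂ t x) (Ico 0 T) :=
    fun s hs => (eq_of_lt h₁ h₂ hinit hs hx).1
  have eρ : EqOn (fun t => ρ₁ t x) (fun t => ρ₂ t x) (Ico 0 T) :=
    fun s hs => (eq_of_lt h₁ h₂ hinit hs hx).2
  exact ⟨eω.of_subset_closure (h₁.cω_t hx) (h₂.cω_t hx) Ico_subset_Icc_self hcl ht,
    eρ.of_subset_closure (h₁.cρ_t hx) (h₂.cρ_t hx) Ico_subset_Icc_self hcl ht⟩
end
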